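/- arXiv:1210.6430 — 2 statements merged into one kernel-verified Lean document; each statement's English description precedes it below -/
import Mathlib

section
/- The matrix π₂ satisfies the orthogonality relations defining A_q(B₃): for all 1 ≤ i,m ≤ 7 one has Σ_{j,k,l=1}^{7} C_{jk} C_{lm} π₂(t_{ij}) ∘ π₂(t_{lk}) = δ_{i,m}·id_F and Σ_{j,k,l=1}^{7} C_{ij} C_{kl} π₂(t_{kj}) ∘ π₂(t_{lm}) = δ_{i,m}·id_F as operators on F. -/
open TensorProduct

noncomputable section

abbrev Fq : Type := RatFunc ℚ

def q : Fq := RatFunc.X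

abbrev F : Type := ℕ →₀ Fq

def ket (m : ℕ) : F := Finsupp.single m 1

/-- Linear operator on the Fock space from its action on the basis. -/
def opOf (v : ℕ → F) : F →ₗ[Fq] F := Finsupp.lift F Fq ℕ v

/-- q²-oscillator K -/
def K2 : F →ₗ[Fq] F := opOf fun m => q ^ (2 * m) • ket m
/-- q²-oscillator A⁺ -/
def Ap : F →ₗ[Fq] F := opOf fun m => ket (m + 1)
/-- q²-oscillator A⁻ -/
def Am : F →ₗ[Fq] F := opOf fun m => (1 - q ^ (4 * m)) • ket (m - 1)
/-- q-oscillator k -/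
def kk : F →ₗ[Fq] F := opOf fun m => q ^ m • ket m
/-- q-oscillator a⁺ -/
def ap : F →ₗ[Fq] F := opOf fun m => ket (m + 1)
/-- q-oscillator a⁻ -/
def am : F →ₗ[Fq] F := opOf fun m => (1 - q ^ (2 * m)) • ket (m - 1)

def pi1 (α β μ ν κ σ : Fq) : Matrix (Fin 7) (Fin 7) (F →ₗ[Fq] F) :=
  !![μ • Am, α • K2, 0, 0, 0, 0, 0;
     β • K2, ν • Ap, 0, 0, 0, 0, 0;
     0, 0, κ • LinearMap.id, 0, 0, 0, 0;
     0, 0, 0, σ • LinearMap.id, 0, 0, 0;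
     0, 0, 0, 0, κ⁻¹ • LinearMap.id, 0, 0;
     0, 0, 0, 0, 0, ν⁻¹ • Am, (q ^ 2 * β⁻¹) • K2;
     0, 0, 0, 0, 0, (q ^ 2 * α⁻¹) • K2, μ⁻¹ • Ap]

def pi2 (α β μ ν κ σ : Fq) : Matrix (Fin 7) (Fin 7) (F →ₗ[Fq] F) :=
  !![κ • LinearMap.id, 0, 0, 0, 0, 0, 0;
     0, μ • Am, α • K2, 0, 0, 0, 0;
     0, β • K2, ν • Ap, 0, 0, 0, 0;
     0, 0, 0, σ • LinearMap.id, 0, 0, 0;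
     0, 0, 0, 0, ν⁻¹ • Am, (q ^ 2 * β⁻¹) • K2, 0;
     0, 0, 0, 0, (q ^ 2 * α⁻¹) • K2, μ⁻¹ • Ap, 0;
     0, 0, 0, 0, 0, 0, κ⁻¹ • LinearMap.id]

def pi3 (α μ κa κb : Fq) : Matrix (Fin 7) (Fin 7) (F →ₗ[Fq] F) :=
  !![κa • LinearMap.id, 0, 0, 0, 0, 0, 0;
     0, κb • LinearMap.id, 0, 0, 0, 0, 0;
     0, 0, μ • (am ∘ₗ am), α • (kk ∘ₗ am), (-((1 + q ^ 2) * μ)⁻¹ * α ^ 2) • (kk ∘ₗ kk), 0, 0;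
     0, 0, (-(1 + q ^ 2) * α⁻¹ * μ) • (am ∘ₗ kk), am ∘ₗ ap - kk ∘ₗ kk, (-(q * μ)⁻¹ * α) • (kk ∘ₗ ap), 0, 0;
     0, 0, (-(1 + q ^ 2) * q ^ 2 * α⁻¹ ^ 2 * μ) • (kk ∘ₗ kk), ((1 + q ^ 2) * α⁻¹) • (kk ∘ₗ ap), μ⁻¹ • (ap ∘ₗ ap), 0, 0;
     0, 0, 0, 0, 0, κb⁻¹ • LinearMap.id, 0;
     0, 0, 0, 0, 0, 0, κa⁻¹ • LinearMap.id]

def rhoB : Fin 7 → ℤ := ![5, 3, 1, 0, -1, -3, -5]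

def CB : Matrix (Fin 7) (Fin 7) Fq := fun i j => if (i : ℕ) + (j : ℕ) = 6 then q ^ rhoB j else 0

lemma CB_eq (i j : Fin 7) : CB i j = if j = i.rev then q ^ rhoB j else 0 := by
  unfold CB
  congr 1
  simp only [Fin.ext_iff, Fin.val_rev, eq_iff_iff]
  omega

lemma CB_eq' (i j : Fin 7) : CB i j = if i = j.rev then q ^ rhoB j else 0 := by
  unfold CB
  congr 1
  simp only [Fin.ext_iff, Fin.val_rev, eq_iff_iff]
  omega

lemma sum_left (f : Fin 7 → Fin 7 → Fin 7 → (F →ₗ[Fq] F)) (m : Fin 7) :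
    (∑ j : Fin 7, ∑ k : Fin 7, ∑ l : Fin 7, (CB j k * CB l m) • f j k l)
      = ∑ j : Fin 7, (q ^ rhoB j.rev * q ^ rhoB m) • f j j.rev m.rev := by
  refine Finset.sum_congr rfl fun j _ => ?_
  rw [Finset.sum_eq_single j.rev, Finset.sum_eq_single m.rev]
  · rw [CB_eq, CB_eq', if_pos rfl, if_pos rfl]
  · intro l _ hl
    rw [CB_eq' l m, if_neg hl, mul_zero, zero_smul]
  · simp
  · intro k _ hk
    refine Finset.sum_eq_zero fun l _ => ?_
    rw [CB_eq j k, if_neg hk, zero_mul, zero_smul]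
  · simp

lemma sum_right (f : Fin 7 → Fin 7 → Fin 7 → (F →ₗ[Fq] F)) (i : Fin 7) :
    (∑ j : Fin 7, ∑ k : Fin 7, ∑ l : Fin 7, (CB i j * CB k l) • f j k l)
      = ∑ k : Fin 7, (q ^ rhoB i.rev * q ^ rhoB k.rev) • f i.rev k k.rev := by
  rw [Finset.sum_eq_single i.rev]
  · refine Finset.sum_congr rfl fun k _ => ?_
    rw [Finset.sum_eq_single k.rev]
    · rw [CB_eq i, CB_eq k, if_pos rfl, if_pos rfl]
    · intro l _ hl
      rw [CB_eq k l, if_neg hl, mul_zero, zero_smul]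
    · simp
  · intro j _ hj
    refine Finset.sum_eq_zero fun k _ => Finset.sum_eq_zero fun l _ => ?_
    rw [CB_eq i j, if_neg hj, zero_mul, zero_smul]
  · simp

lemma q_ne : q ≠ 0 := RatFunc.X_ne_zero

lemma opOf_ket (v : ℕ → F) (m : ℕ) : opOf v (ket m) = v m := by
  simp [opOf, ket]

lemma op_ext {f g : F →ₗ[Fq] F} (h : ∀ m, f (ket m) = g (ket m)) : f = g := by
  apply Finsupp.lhom_ext'
  intro m
  ext1
  exact h m

lemma Am_Ap : Am ∘ₗ Ap = LinearMap.id - q ^ 4 • (K2 ∘ₗ K2) := by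
  apply op_ext; intro m
  simp only [Am, Ap, K2, LinearMap.comp_apply, LinearMap.sub_apply, LinearMap.smul_apply,
    LinearMap.id_apply, opOf_ket, map_smul, Nat.add_sub_cancel, sub_smul, one_smul, smul_smul]
  congr 2
  ring

lemma Ap_Am : Ap ∘ₗ Am = LinearMap.id - K2 ∘ₗ K2 := by
  apply op_ext; intro m
  simp only [Am, Ap, K2, LinearMap.comp_apply, LinearMap.sub_apply,
    LinearMap.id_apply, opOf_ket, map_smul]
  rcases m with _ | m
  · simp
  · simp only [Nat.add_sub_cancel, sub_smul, one_smul, smul_smul]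
    congr 2
    ring

lemma Ap_K : Ap ∘ₗ K2 = (q ^ 2)⁻¹ • (K2 ∘ₗ Ap) := by
  apply op_ext; intro m
  simp only [Ap, K2, LinearMap.comp_apply, LinearMap.smul_apply, opOf_ket, map_smul, smul_smul]
  congr 1
  have := q_ne
  field_simp
  ring

lemma Am_K : Am ∘ₗ K2 = q ^ 2 • (K2 ∘ₗ Am) := by
  apply op_ext; intro m
  simp only [Am, K2, LinearMap.comp_apply, LinearMap.smul_apply, opOf_ket, map_smul, smul_smul]
  rcases m with _ | m
  · simp
  · simp only [Nat.add_sub_cancel]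
    congr 1
    ring

lemma shape_one {a : Fq} {X : F →ₗ[Fq] F} (h : a = 1) : a • X = X := by
  rw [h, one_smul]

lemma shape_zero {a b : Fq} {X : F →ₗ[Fq] F} (h : a + b = 0) : a • X + b • X = 0 := by
  rw [← add_smul, h, zero_smul]

lemma shape_three {a b c : Fq} {X Y : F →ₗ[Fq] F} (h : a = 1) (h' : b = c) :
    a • (X - c • Y) + b • Y = X := by
  rw [h, h', one_smul]
  exact sub_add_cancel X _

lemma shape_four {a b : Fq} {X Y : F →ₗ[Fq] F} (h : a = 1) (h' : b = 1) :
    b • Y + a • (X - Y) = X := by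
  rw [h, h', one_smul, one_smul]
  exact add_sub_cancel Y X

set_option maxHeartbeats 4000000 in
/-- the matrix π₂ satisfies the orthogonality relations defining A_q(B₃). -/
theorem pi2_orthogonality
    (α β μ ν κ σ : Fq) (hα : α ≠ 0) (hβ : β ≠ 0) (hμ : μ ≠ 0) (hν : ν ≠ 0)
    (hκ : κ ≠ 0) (hσ0 : σ ≠ 0)
    (hrel : α * β = -q ^ 2 * (μ * ν)) (hσ : σ = 1 ∨ σ = -1) :
    ∀ i m : Fin 7,
      ((∑ j : Fin 7, ∑ k : Fin 7, ∑ l : Fin 7,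
        (CB j k * CB l m) • (pi2 α β μ ν κ σ i j ∘ₗ pi2 α β μ ν κ σ l k))
        = if i = m then LinearMap.id else 0) ∧
      ((∑ j : Fin 7, ∑ k : Fin 7, ∑ l : Fin 7,
        (CB i j * CB k l) • (pi2 α β μ ν κ σ k j ∘ₗ pi2 α β μ ν κ σ l m))
        = if i = m then LinearMap.id else 0) := by
  have hq := q_ne
  have hσ2 : σ * σ = 1 := by rcases hσ with rfl | rfl <;> ring
  have hμe : μ = -(α * β) * (q ^ 2)⁻¹ * ν⁻¹ := by
    rw [hrel]; field_simp
  intro i m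
  rw [sum_left (fun j k l => pi2 α β μ ν κ σ i j ∘ₗ pi2 α β μ ν κ σ l k),
    sum_right (fun j k l => pi2 α β μ ν κ σ k j ∘ₗ pi2 α β μ ν κ σ l m)]
  clear hrel hσ
  have r0 : (0 : Fin 7).rev = 6 := rfl
  have r1 : (1 : Fin 7).rev = 5 := rfl
  have r2 : (2 : Fin 7).rev = 4 := rfl
  have r3 : (3 : Fin 7).rev = 3 := rfl
  have r4 : (4 : Fin 7).rev = 2 := rfl
  have r5 : (5 : Fin 7).rev = 1 := rfl
  have r6 : (6 : Fin 7).rev = 0 := rfl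
  constructor <;> fin_cases i <;> fin_cases m <;>
    simp [Fin.sum_univ_seven, r0, r1, r2, r3, r4, r5, r6, pi2, rhoB, LinearMap.comp_smul,
      LinearMap.smul_comp, Am_Ap, Ap_Am, Ap_K, Am_K, smul_smul] <;>
    (first
      | with_reducible_and_instances refine shape_one ?_
      | with_reducible_and_instances refine shape_three ?_ ?_
      | with_reducible_and_instances refine shape_four ?_ ?_
      | with_reducible_and_instances refine shape_zero ?_) <;>
    (clear r0 r1 r2 r3 r4 r5 r6) <;>
    (first
      | with_reducible assumption
      | (field_simp; done)
      | (rw [hμe]; field_simp; done)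
      | (rw [hμe]; field_simp; ring))
end
end

section
/- (Theorem 4.1) Assume κ₁ = σ₁, κ₁ = κ₂ = σ₂ and α₁β₁ = α₂β₂. For a,b,c,i,j,k ∈ ℕ set S^{abc}_{ijk} = (-α₁β₁q^{-2})^{j} μ₁^{a-j+k} μ₂^{b-a-k} σ₁^{b+j} 𝒮^{abc}_{ijk}, and define the ℚ(q)-linear map Φ : F⊗F⊗F → F⊗F⊗F by Φ(|i⟩⊗|j⟩⊗|k⟩) = Σ_{a,b,c∈ℕ} S^{abc}_{kji} |a⟩⊗|b⟩⊗|c⟩ (a finite sum, since 𝒮^{abc}_{kji} = 0 unless a+b = k+j and b+c = j+i). Then Φ is bijective, Φ(|0⟩⊗|0⟩⊗|0⟩) = |0⟩⊗|0⟩⊗|0⟩, and Φ intertwines π₁₂₁ and π₂₁₂: for all 1 ≤ I,J ≤ 7, (Σ_{K,L=1}^{7} π₂(t_{IK})⊗π₁(t_{KL})⊗π₂(t_{LJ})) ∘ Φ = Φ ∘ (Σ_{K,L=1}^{7} π₁(t_{IK})⊗π₂(t_{KL})⊗π₁(t_{LJ})). -/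
open TensorProduct

noncomputable section

/-- `(p)_n` for an integer `n`: `∏_{l=1}^{n}(1-p^l)` if `n ≥ 0`, and `0` if `n < 0`
(the latter convention makes the q-multinomial bracket below vanish, via multiplication
for a numerator index and via division by zero for a denominator index, whenever some
index is negative, as required). -/
def qfac (p : Fq) (n : ℤ) : Fq :=
  if 0 ≤ n then ∏ l ∈ Finset.range n.toNat, (1 - p ^ (l + 1)) else 0

/-- The matrix element 𝒮^{abc}_{ijk} (with λ = b - μ in the sum over λ + μ = b). -/
def Scoef (a b c i j k : ℕ) : Fq :=
  (if i + j = a + b then 1 else 0) * (if j + k = b + c then 1 else 0) *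
    ∑ μ ∈ Finset.range (b + 1),
      (-1 : Fq) ^ (b - μ) *
        q ^ (2 * (i : ℤ) * ((c : ℤ) - (j : ℤ)) + 2 * ((k : ℤ) + 1) * ((b : ℤ) - (μ : ℤ))
          + 2 * (μ : ℤ) * ((μ : ℤ) - (k : ℤ))) *
        ((qfac (q ^ 4) (i : ℤ) * qfac (q ^ 4) (j : ℤ) * qfac (q ^ 4) ((c : ℤ) + (μ : ℤ))) /
          (qfac (q ^ 4) (μ : ℤ) * qfac (q ^ 4) ((b : ℤ) - (μ : ℤ)) *
            qfac (q ^ 4) ((i : ℤ) - (μ : ℤ)) * qfac (q ^ 4) ((j : ℤ) - ((b : ℤ) - (μ : ℤ))) *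
            qfac (q ^ 4) (c : ℤ)))

/-- The full matrix element S^{abc}_{ijk} including the parameters. -/
def Sfull (α₁ β₁ μ₁ μ₂ σ₁ : Fq) (a b c i j k : ℕ) : Fq :=
  (-(α₁ * β₁) * q ^ (-2 : ℤ)) ^ j * μ₁ ^ ((a : ℤ) - (j : ℤ) + (k : ℤ)) *
    μ₂ ^ ((b : ℤ) - (a : ℤ) - (k : ℤ)) * σ₁ ^ (b + j) * Scoef a b c i j k

set_option linter.unusedSimpArgs false
set_option linter.unusedSectionVars false

def hh : Fq := q ^ 2 - (q ^ 2)⁻¹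

def Rm (i j m n : Fin 3) : Fq :=
  (if i = m ∧ j = n then (if i = j then q ^ 2 else 1) else 0)
    + (if j < i ∧ i = n ∧ j = m then hh else 0)

lemma Rm_sum_left {A : Type*} [AddCommMonoid A] [Module Fq A] (i j : Fin 3)
    (X : Fin 3 → Fin 3 → A) :
    ∑ m, ∑ n, Rm i j m n • X m n
      = (if i = j then q ^ 2 else 1 : Fq) • X i j + (if j < i then hh else 0 : Fq) • X j i := by
  fin_cases i <;> fin_cases j <;> simp [Fin.sum_univ_three, Rm, add_comm]

lemma Rm_sum_right {A : Type*} [AddCommMonoid A] [Module Fq A] (k l : Fin 3)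
    (X : Fin 3 → Fin 3 → A) :
    ∑ m, ∑ n, Rm m n k l • X m n
      = (if k = l then q ^ 2 else 1 : Fq) • X k l + (if k < l then hh else 0 : Fq) • X l k := by
  fin_cases k <;> fin_cases l <;> simp [Fin.sum_univ_three, Rm, add_comm]

def RTT {A : Type*} [Semiring A] [Algebra Fq A] (T : Matrix (Fin 3) (Fin 3) A) : Prop :=
  ∀ i j k l, ∑ m, ∑ n, Rm i j m n • (T m k * T n l) = ∑ m, ∑ n, Rm m n k l • (T j n * T i m)

section
variable {A : Type*} [Semiring A] [Algebra Fq A]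

lemma sum_swap4 (f : Fin 3 → Fin 3 → Fin 3 → Fin 3 → A) :
    ∑ m, ∑ n, ∑ a, ∑ b, f m n a b = ∑ a, ∑ b, ∑ m, ∑ n, f m n a b := by
  calc _ = ∑ m, ∑ a, ∑ n, ∑ b, f m n a b := Finset.sum_congr rfl fun m _ => Finset.sum_comm
    _ = ∑ a, ∑ m, ∑ n, ∑ b, f m n a b := Finset.sum_comm
    _ = ∑ a, ∑ m, ∑ b, ∑ n, f m n a b :=
      Finset.sum_congr rfl fun a _ => Finset.sum_congr rfl fun m _ => Finset.sum_comm
    _ = _ := Finset.sum_congr rfl fun a _ => Finset.sum_comm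

lemma RTT.mul {S T : Matrix (Fin 3) (Fin 3) A} (hS : RTT S) (hT : RTT T)
    (hc : ∀ i j k l, T k l * S i j = S i j * T k l) : RTT (S * T) := by
  intro i j k l
  have e1 : ∀ m n, (S * T) m k * (S * T) n l
      = ∑ a, ∑ b, (S m a * S n b) * (T a k * T b l) := by
    intro m n
    simp only [Matrix.mul_apply, Finset.sum_mul_sum]
    refine Finset.sum_congr rfl fun a _ => Finset.sum_congr rfl fun b _ => ?_
    rw [mul_assoc, ← mul_assoc (T a k), hc, mul_assoc, mul_assoc]
  have e2 : ∀ m n, (S * T) j n * (S * T) i m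
      = ∑ a, ∑ b, (S j b * S i a) * (T b n * T a m) := by
    intro m n
    simp only [Matrix.mul_apply, Finset.sum_mul_sum]
    rw [Finset.sum_comm]
    refine Finset.sum_congr rfl fun a _ => Finset.sum_congr rfl fun b _ => ?_
    rw [mul_assoc, ← mul_assoc (T b n), hc, mul_assoc, mul_assoc]
  simp only [e1, e2]
  have f1 : ∑ m, ∑ n, Rm i j m n • ∑ a, ∑ b, (S m a * S n b) * (T a k * T b l)
      = ∑ a, ∑ b, (∑ m, ∑ n, Rm i j m n • (S m a * S n b)) * (T a k * T b l) := by
    simp only [Finset.smul_sum, Finset.sum_mul, ← smul_mul_assoc]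
    rw [sum_swap4]
  have f2 : ∑ m, ∑ n, Rm m n k l • ∑ a, ∑ b, (S j b * S i a) * (T b n * T a m)
      = ∑ a, ∑ b, (S j b * S i a) * (∑ m, ∑ n, Rm m n k l • (T b n * T a m)) := by
    simp only [Finset.smul_sum, Finset.mul_sum, mul_smul_comm]
    rw [sum_swap4]
  rw [f1, f2]
  simp only [hS i j, ← hT _ _ k l]
  simp only [Finset.mul_sum, Finset.sum_mul, smul_mul_assoc, mul_smul_comm]
  rw [sum_swap4]

lemma RTT.exp {T : Matrix (Fin 3) (Fin 3) A} (h : RTT T) (i j k l : Fin 3) :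
   (if i = j then q ^ 2 else 1 : Fq) • (T i k * T j l)
     + (if j < i then hh else 0 : Fq) • (T j k * T i l)
   = (if k = l then q ^ 2 else 1 : Fq) • (T j l * T i k)
     + (if k < l then hh else 0 : Fq) • (T j k * T i l) := by
  have := h i j k l
  rwa [Rm_sum_left i j (fun m n => T m k * T n l),
    Rm_sum_right k l (fun m n => T j n * T i m)] at this

lemma RTT.of_exp {T : Matrix (Fin 3) (Fin 3) A} (h : ∀ i j k l : Fin 3,
   (if i = j then q ^ 2 else 1 : Fq) • (T i k * T j l)
     + (if j < i then hh else 0 : Fq) • (T j k * T i l)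
   = (if k = l then q ^ 2 else 1 : Fq) • (T j l * T i k)
     + (if k < l then hh else 0 : Fq) • (T j k * T i l)) : RTT T := by
  intro i j k l
  rw [Rm_sum_left i j (fun m n => T m k * T n l),
    Rm_sum_right k l (fun m n => T j n * T i m)]
  exact h i j k l

lemma RTT.row {T : Matrix (Fin 3) (Fin 3) A} (h : RTT T) (i : Fin 3) {k l : Fin 3}
    (hkl : k < l) : T i k * T i l = q ^ 2 • (T i l * T i k) := by
  have := h.exp i i k l
  have q0 := q_ne
  simp [hkl, hkl.ne] at this
  have h2 : (q ^ 2)⁻¹ • (T i k * T i l) = T i l * T i k := by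
    have e1 : (q ^ 2)⁻¹ = q ^ 2 + -hh := by rw [hh]; ring
    rw [e1, add_smul, this, add_assoc, ← add_smul, add_neg_cancel, zero_smul, add_zero]
  rw [← h2, smul_smul, mul_inv_cancel₀ (pow_ne_zero 2 q0), one_smul]

lemma RTT.anti {T : Matrix (Fin 3) (Fin 3) A} (h : RTT T) {i j k l : Fin 3}
    (hij : i < j) (hkl : k < l) : T i l * T j k = T j k * T i l := by
  have := h.exp i j l k
  simpa [hkl.not_gt, hkl.ne', hij.not_gt, hij.ne] using this

lemma RTT.col {T : Matrix (Fin 3) (Fin 3) A} (h : RTT T) (k : Fin 3) {i j : Fin 3}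
    (hij : i < j) : T i k * T j k = q ^ 2 • (T j k * T i k) := by
  have := h.exp i j k k
  simpa [hij.not_gt, hij.ne] using this

lemma RTT.diag {T : Matrix (Fin 3) (Fin 3) A} (h : RTT T) {i j k l : Fin 3}
    (hij : i < j) (hkl : k < l) :
    T i k * T j l = T j l * T i k + hh • (T i l * T j k) := by
  have := h.exp i j k l
  rw [h.anti hij hkl]
  simpa [hkl, hkl.ne, hij.not_gt, hij.ne] using this

lemma RTT.map {B : Type*} [Semiring B] [Algebra Fq B] {T : Matrix (Fin 3) (Fin 3) A} (h : RTT T)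
    (f : A →ₐ[Fq] B) : RTT (T.map f) := by
  intro i j k l
  have := congrArg f (h i j k l)
  simpa only [map_sum, map_smul, map_mul, Matrix.map_apply] using this

end

lemma F_ext {X Y : F →ₗ[Fq] F} (h : ∀ m, X (ket m) = Y (ket m)) : X = Y := by
  refine Finsupp.lhom_ext' fun m => LinearMap.ext_ring ?_
  simpa [ket] using h m

lemma K2_ket (m : ℕ) : K2 (ket m) = q ^ (2 * m) • ket m := opOf_ket _ _
lemma Ap_ket (m : ℕ) : Ap (ket m) = ket (m + 1) := opOf_ket _ _
lemma Am_ket (m : ℕ) : Am (ket m) = (1 - q ^ (4 * m)) • ket (m - 1) := opOf_ket _ _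

lemma KP : (K2 * Ap : Module.End Fq F) = q ^ 2 • (Ap * K2) := by
  refine F_ext fun m => ?_
  simp [K2_ket, Ap_ket, smul_smul]; congr 1; ring

lemma MK : (Am * K2 : Module.End Fq F) = q ^ 2 • (K2 * Am) := by
  refine F_ext fun m => ?_
  rcases m with _ | m
  · simp [K2_ket, Am_ket]
  · simp [K2_ket, Am_ket, smul_smul]; congr 1; ring

lemma MP : (Am * Ap : Module.End Fq F) = 1 - q ^ 4 • (K2 * K2) := by
  refine F_ext fun m => ?_
  simp [K2_ket, Ap_ket, Am_ket, smul_smul, sub_smul]; congr 1; ring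

lemma PM : (Ap * Am : Module.End Fq F) = 1 - K2 * K2 := by
  refine F_ext fun m => ?_
  rcases m with _ | m
  · simp [K2_ket, Am_ket]
  · simp [K2_ket, Ap_ket, Am_ket, smul_smul, sub_smul]; congr 1; ring

def e3 : Fin 3 → Fin 7 := ![0, 1, 2]
def f3 : Fin 3 → Fin 7 := ![6, 5, 4]

def T3 {A : Type*} (M : Matrix (Fin 7) (Fin 7) A) : Matrix (Fin 3) (Fin 3) A :=
  fun i j => M (e3 i) (e3 j)

def w3 : Fin 3 → Fq := ![1, q ^ 2, q ^ 4]

def D3 {A : Type*} [SMul Fq A] (M : Matrix (Fin 7) (Fin 7) A) : Matrix (Fin 3) (Fin 3) A :=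
  fun i j => (w3 i * (w3 j)⁻¹) • M (f3 j) (f3 i)

abbrev EF := Module.End Fq F

/-- entries of the representations, with values in the endomorphism ring -/
def Q1 (α β μ ν κ σ : Fq) : Matrix (Fin 7) (Fin 7) EF := pi1 α β μ ν κ σ
def Q2 (α β μ ν κ σ : Fq) : Matrix (Fin 7) (Fin 7) EF := pi2 α β μ ν κ σ

section
variable (α β μ ν κ σ : Fq)

lemma T3Q1 : T3 (Q1 α β μ ν κ σ) = !![μ • (Am : EF), α • K2, 0; β • K2, ν • Ap, 0; 0, 0, κ • 1] := by
  ext1 i j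
  fin_cases i <;> fin_cases j <;> rfl

lemma T3Q2 : T3 (Q2 α β μ ν κ σ) = !![κ • 1, 0, 0; 0, μ • (Am : EF), α • K2; 0, β • K2, ν • Ap] := by
  ext1 i j
  fin_cases i <;> fin_cases j <;> rfl

end

def expRel {A : Type*} [Ring A] {R : Type*} [Field R] [Algebra R A] (q : R)
    (T : Matrix (Fin 3) (Fin 3) A) : Prop := ∀ i j k l : Fin 3,
   (if i = j then q ^ 2 else 1 : R) • (T i k * T j l)
     + (if j < i then q ^ 2 - (q ^ 2)⁻¹ else 0 : R) • (T j k * T i l)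
   = (if k = l then q ^ 2 else 1 : R) • (T j l * T i k)
     + (if k < l then q ^ 2 - (q ^ 2)⁻¹ else 0 : R) • (T j k * T i l)

set_option maxHeartbeats 2000000 in
lemma rtt_abs1 {A : Type*} [Ring A] {R : Type*} [Field R] [Algebra R A] (q α β μ ν κ : R) (q0 : q ≠ 0) (k p m : A)
    (KP : k * p = q ^ 2 • (p * k)) (MK : m * k = q ^ 2 • (k * m))
    (MP : m * p = 1 - q ^ 4 • (k * k)) (PM : p * m = 1 - k * k)
    (h : α * β = -q ^ 2 * (μ * ν)) :
    expRel q !![μ • m, α • k, 0; β • k, ν • p, 0; 0, 0, κ • (1 : A)] := by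
  intro i j k l
  have hb : β * α = -q ^ 2 * (μ * ν) := by rw [mul_comm, h]
  fin_cases i <;> fin_cases j <;> fin_cases k <;> fin_cases l <;>
    simp [expRel, smul_smul, KP, MK, MP, PM, h, hb, smul_sub] <;> match_scalars <;> field_simp <;>
    ring1

set_option maxHeartbeats 2000000 in
lemma rtt_abs2 {A : Type*} [Ring A] {R : Type*} [Field R] [Algebra R A] (q α β μ ν κ : R) (q0 : q ≠ 0) (k p m : A)
    (KP : k * p = q ^ 2 • (p * k)) (MK : m * k = q ^ 2 • (k * m))
    (MP : m * p = 1 - q ^ 4 • (k * k)) (PM : p * m = 1 - k * k)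
    (h : α * β = -q ^ 2 * (μ * ν)) :
    expRel q !![κ • (1 : A), 0, 0; 0, μ • m, α • k; 0, β • k, ν • p] := by
  intro i j k l
  have hb : β * α = -q ^ 2 * (μ * ν) := by rw [mul_comm, h]
  fin_cases i <;> fin_cases j <;> fin_cases k <;> fin_cases l <;>
    simp [expRel, smul_smul, KP, MK, MP, PM, h, hb, smul_sub] <;> match_scalars <;> field_simp <;>
    ring1

lemma inv_abs1 {A : Type*} [Ring A] {R : Type*} [Field R] [Algebra R A] (q α β μ ν κ : R) (q0 : q ≠ 0) (k p m : A)
    (KP : k * p = q ^ 2 • (p * k)) (MK : m * k = q ^ 2 • (k * m))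
    (MP : m * p = 1 - q ^ 4 • (k * k)) (PM : p * m = 1 - k * k)
    (hα : α ≠ 0) (hβ : β ≠ 0) (hμ : μ ≠ 0) (hν : ν ≠ 0) (hκ : κ ≠ 0)
    (h : α * β = -q ^ 2 * (μ * ν)) :
    !![μ • m, α • k, 0; β • k, ν • p, 0; 0, 0, κ • (1 : A)] *
      !![μ⁻¹ • p, β⁻¹ • k, 0; (q ^ 4 * α⁻¹) • k, ν⁻¹ • m, 0; 0, 0, κ⁻¹ • (1 : A)] = 1 ∧
    !![μ⁻¹ • p, β⁻¹ • k, 0; (q ^ 4 * α⁻¹) • k, ν⁻¹ • m, 0; 0, 0, κ⁻¹ • (1 : A)] *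
      !![μ • m, α • k, 0; β • k, ν • p, 0; 0, 0, κ • (1 : A)] = 1 := by
  have hb : β = -q ^ 2 * (μ * ν) * α⁻¹ := by field_simp; linear_combination h
  subst hb
  constructor <;> ext1 i j <;> fin_cases i <;> fin_cases j <;>
    simp [Matrix.mul_apply, Fin.sum_univ_three, smul_smul, KP, MK, MP, PM, smul_sub,
      hα, hμ, hν, hκ, q0] <;> match_scalars <;> field_simp <;> ring1

lemma inv_abs2 {A : Type*} [Ring A] {R : Type*} [Field R] [Algebra R A] (q α β μ ν κ : R) (q0 : q ≠ 0) (k p m : A)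
    (KP : k * p = q ^ 2 • (p * k)) (MK : m * k = q ^ 2 • (k * m))
    (MP : m * p = 1 - q ^ 4 • (k * k)) (PM : p * m = 1 - k * k)
    (hα : α ≠ 0) (hβ : β ≠ 0) (hμ : μ ≠ 0) (hν : ν ≠ 0) (hκ : κ ≠ 0)
    (h : α * β = -q ^ 2 * (μ * ν)) :
    !![κ • (1 : A), 0, 0; 0, μ • m, α • k; 0, β • k, ν • p] *
      !![κ⁻¹ • (1 : A), 0, 0; 0, μ⁻¹ • p, β⁻¹ • k; 0, (q ^ 4 * α⁻¹) • k, ν⁻¹ • m] = 1 ∧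
    !![κ⁻¹ • (1 : A), 0, 0; 0, μ⁻¹ • p, β⁻¹ • k; 0, (q ^ 4 * α⁻¹) • k, ν⁻¹ • m] *
      !![κ • (1 : A), 0, 0; 0, μ • m, α • k; 0, β • k, ν • p] = 1 := by
  have hb : β = -q ^ 2 * (μ * ν) * α⁻¹ := by field_simp; linear_combination h
  subst hb
  constructor <;> ext1 i j <;> fin_cases i <;> fin_cases j <;>
    simp [Matrix.mul_apply, Fin.sum_univ_three, smul_smul, KP, MK, MP, PM, smul_sub,
      hα, hμ, hν, hκ, q0] <;> match_scalars <;> field_simp <;> ring1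

section
variable (α β μ ν κ σ : Fq)

lemma rtt_Q1 (h : α * β = -q ^ 2 * (μ * ν)) : RTT (T3 (Q1 α β μ ν κ σ)) := by
  rw [T3Q1]
  exact RTT.of_exp (rtt_abs1 q α β μ ν κ q_ne K2 Ap Am KP MK MP PM h)

lemma rtt_Q2 (h : α * β = -q ^ 2 * (μ * ν)) : RTT (T3 (Q2 α β μ ν κ σ)) := by
  rw [T3Q2]
  exact RTT.of_exp (rtt_abs2 q α β μ ν κ q_ne K2 Ap Am KP MK MP PM h)

lemma D3Q1 : D3 (Q1 α β μ ν κ σ) = !![μ⁻¹ • (Ap : EF), β⁻¹ • K2, 0;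
    (q ^ 4 * α⁻¹) • K2, ν⁻¹ • Am, 0; 0, 0, κ⁻¹ • 1] := by
  have q0 := q_ne
  ext1 i j
  fin_cases i <;> fin_cases j <;>
    simp [D3, Q1, pi1, f3, w3, smul_smul, q0] <;> first | rfl | (congr 1; field_simp)

lemma D3Q2 : D3 (Q2 α β μ ν κ σ) = !![κ⁻¹ • 1, 0, 0; 0, μ⁻¹ • (Ap : EF), β⁻¹ • K2;
    0, (q ^ 4 * α⁻¹) • K2, ν⁻¹ • Am] := by
  have q0 := q_ne
  ext1 i j
  fin_cases i <;> fin_cases j <;>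
    simp [D3, Q2, pi2, f3, w3, smul_smul, q0] <;> first | rfl | (congr 1; field_simp)

def IsInv3 {A : Type*} [Semiring A] [Algebra Fq A] (M : Matrix (Fin 7) (Fin 7) A) : Prop :=
  T3 M * D3 M = 1 ∧ D3 M * T3 M = 1

lemma inv_Q1 (hα : α ≠ 0) (hβ : β ≠ 0) (hμ : μ ≠ 0) (hν : ν ≠ 0) (hκ : κ ≠ 0)
    (h : α * β = -q ^ 2 * (μ * ν)) : IsInv3 (Q1 α β μ ν κ σ) := by
  rw [IsInv3, T3Q1, D3Q1]
  exact inv_abs1 q α β μ ν κ q_ne (K2 : EF) Ap Am KP MK MP PM hα hβ hμ hν hκ h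

lemma inv_Q2 (hα : α ≠ 0) (hβ : β ≠ 0) (hμ : μ ≠ 0) (hν : ν ≠ 0) (hκ : κ ≠ 0)
    (h : α * β = -q ^ 2 * (μ * ν)) : IsInv3 (Q2 α β μ ν κ σ) := by
  rw [IsInv3, T3Q2, D3Q2]
  exact inv_abs2 q α β μ ν κ q_ne (K2 : EF) Ap Am KP MK MP PM hα hβ hμ hν hκ h
end

/-! ### block structure -/

def bl : Fin 7 → Fin 3 := ![0, 0, 0, 1, 2, 2, 2]

section
variable {A : Type*} [Semiring A] [Algebra Fq A]

def Blk (M : Matrix (Fin 7) (Fin 7) A) : Prop := ∀ I J, bl I ≠ bl J → M I J = 0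

lemma Blk.mul {M N : Matrix (Fin 7) (Fin 7) A} (hM : Blk M) (hN : Blk N) : Blk (M * N) := by
  intro I J h
  rw [Matrix.mul_apply]
  refine Finset.sum_eq_zero fun L _ => ?_
  by_cases h1 : bl I = bl L
  · rw [hN L J (by rwa [← h1]), mul_zero]
  · rw [hM I L h1, zero_mul]

lemma Blk.T3_mul {M N : Matrix (Fin 7) (Fin 7) A} (hM : Blk M) : T3 (M * N) = T3 M * T3 N := by
  ext1 i j
  have h3 : M (e3 i) 3 = 0 := hM _ _ (by fin_cases i <;> decide)
  have h4 : M (e3 i) 4 = 0 := hM _ _ (by fin_cases i <;> decide)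
  have h5 : M (e3 i) 5 = 0 := hM _ _ (by fin_cases i <;> decide)
  have h6 : M (e3 i) 6 = 0 := hM _ _ (by fin_cases i <;> decide)
  simp only [T3, Matrix.mul_apply, Fin.sum_univ_seven, Fin.sum_univ_three, h3, h4, h5, h6]
  simp [e3]

lemma Blk.mid_mul {M N : Matrix (Fin 7) (Fin 7) A} (hM : Blk M) :
    (M * N) 3 3 = M 3 3 * N 3 3 := by
  rw [Matrix.mul_apply, Finset.sum_eq_single 3]
  · intro b _ hb
    rw [hM 3 b (by revert hb; revert b; decide), zero_mul]
  · simp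

lemma w3_ne (i : Fin 3) : w3 i ≠ 0 := by
  have q0 := q_ne
  fin_cases i <;> simp [w3, q0]

lemma Blk.D3_mul {M N : Matrix (Fin 7) (Fin 7) A} (hM : Blk M)
    (hc : ∀ I J K L, N I J * M K L = M K L * N I J) : D3 (M * N) = D3 N * D3 M := by
  ext1 i j
  have h0 : M (f3 j) 0 = 0 := hM _ _ (by fin_cases j <;> decide)
  have h1 : M (f3 j) 1 = 0 := hM _ _ (by fin_cases j <;> decide)
  have h2 : M (f3 j) 2 = 0 := hM _ _ (by fin_cases j <;> decide)
  have h3 : M (f3 j) 3 = 0 := hM _ _ (by fin_cases j <;> decide)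
  have e : ∀ x, D3 N i x * D3 M x j
      = (w3 i * (w3 j)⁻¹) • (M (f3 j) (f3 x) * N (f3 x) (f3 i)) := by
    intro x
    have := w3_ne x
    have := w3_ne j
    simp only [D3, smul_mul_assoc, mul_smul_comm, hc, smul_smul]
    congr 1
    field_simp
  rw [Matrix.mul_apply]
  simp only [e]
  simp only [D3, Matrix.mul_apply, Fin.sum_univ_seven, Fin.sum_univ_three, h0, h1, h2, h3]
  simp [f3, smul_add]
  abel

lemma IsInv3.mul {M N : Matrix (Fin 7) (Fin 7) A} (hM : IsInv3 M) (hN : IsInv3 N) (bM : Blk M)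
    (hc : ∀ I J K L, N I J * M K L = M K L * N I J) : IsInv3 (M * N) := by
  rw [IsInv3, bM.T3_mul, bM.D3_mul hc]
  constructor
  · rw [mul_assoc, ← mul_assoc (T3 N), hN.1, one_mul, hM.1]
  · rw [mul_assoc, ← mul_assoc (D3 M), hM.2, one_mul, hN.2]

lemma IsInv3.map {B : Type*} [Semiring B] [Algebra Fq B] {M : Matrix (Fin 7) (Fin 7) A}
    (h : IsInv3 M) (f : A →ₐ[Fq] B) : IsInv3 (M.map f) := by
  have hT : T3 (M.map f) = (T3 M).map f := rfl
  have hD : D3 (M.map f) = (D3 M).map f := by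
    ext1 i j
    simp [D3]
  rw [IsInv3, hT, hD, ← Matrix.map_mul, ← Matrix.map_mul, h.1, h.2]
  simp

lemma Blk.map {B : Type*} [Semiring B] [Algebra Fq B] {M : Matrix (Fin 7) (Fin 7) A}
    (h : Blk M) (f : A →ₐ[Fq] B) : Blk (M.map f) := by
  intro I J hIJ
  simp [h I J hIJ]

end

lemma blk_Q1 (α β μ ν κ σ : Fq) : Blk (Q1 α β μ ν κ σ) := by
  intro I J
  fin_cases I <;> fin_cases J <;> simp [bl, Q1, pi1]

lemma blk_Q2 (α β μ ν κ σ : Fq) : Blk (Q2 α β μ ν κ σ) := by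
  intro I J
  fin_cases I <;> fin_cases J <;> simp [bl, Q2, pi2]

/-! ### Part 2: the triple tensor product -/

abbrev F3 := F ⊗[Fq] (F ⊗[Fq] F)
abbrev EE := Module.End Fq F3

def io1 : EF →ₐ[Fq] EE := Module.End.rTensorAlgHom Fq F (F ⊗[Fq] F)
def io2 : EF →ₐ[Fq] EE := (Module.End.lTensorAlgHom Fq (F ⊗[Fq] F) F).comp
  (Module.End.rTensorAlgHom Fq F F)
def io3 : EF →ₐ[Fq] EE := (Module.End.lTensorAlgHom Fq (F ⊗[Fq] F) F).comp
  (Module.End.lTensorAlgHom Fq F F)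

lemma io1_apply (X : EF) : io1 X = TensorProduct.map X (TensorProduct.map LinearMap.id LinearMap.id) := by
  rw [TensorProduct.map_id]; rfl
lemma io2_apply (X : EF) : io2 X = TensorProduct.map LinearMap.id (TensorProduct.map X LinearMap.id) := by
  rfl
lemma io3_apply (X : EF) : io3 X = TensorProduct.map LinearMap.id (TensorProduct.map LinearMap.id X) := by
  rfl

lemma io_mul (X Y Z : EF) : io1 X * io2 Y * io3 Z = TensorProduct.map X (TensorProduct.map Y Z) := by
  simp only [io1_apply, io2_apply, io3_apply, Module.End.mul_eq_comp, ← TensorProduct.map_comp,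
    LinearMap.comp_id, LinearMap.id_comp]

lemma io21 (X Y : EF) : io2 Y * io1 X = io1 X * io2 Y := by
  simp only [io1_apply, io2_apply, io3_apply, Module.End.mul_eq_comp, ← TensorProduct.map_comp,
    LinearMap.comp_id, LinearMap.id_comp]
lemma io31 (X Y : EF) : io3 Y * io1 X = io1 X * io3 Y := by
  simp only [io1_apply, io2_apply, io3_apply, Module.End.mul_eq_comp, ← TensorProduct.map_comp,
    LinearMap.comp_id, LinearMap.id_comp]
lemma io32 (X Y : EF) : io3 Y * io2 X = io2 X * io3 Y := by
  simp only [io1_apply, io2_apply, io3_apply, Module.End.mul_eq_comp, ← TensorProduct.map_comp,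
    LinearMap.comp_id, LinearMap.id_comp]

abbrev M7 := Matrix (Fin 7) (Fin 7) EF

def tri (X Y Z : M7) : Matrix (Fin 7) (Fin 7) EE := X.map io1 * Y.map io2 * Z.map io3

lemma tri_apply (X Y Z : M7) (I J : Fin 7) :
    tri X Y Z I J = ∑ K, ∑ L, TensorProduct.map (X I K) (TensorProduct.map (Y K L) (Z L J)) := by
  simp only [tri, Matrix.mul_apply, Finset.sum_mul, Matrix.map_apply, io_mul]
  exact Finset.sum_comm

lemma tri_comm21 (X Y : M7) (I J K L : Fin 7) :
    (Y.map io2) I J * (X.map io1) K L = (X.map io1) K L * (Y.map io2) I J := io21 _ _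

lemma tri_comm3 (X Y Z : M7) (I J K L : Fin 7) :
    (Z.map io3) I J * (X.map io1 * Y.map io2) K L
      = (X.map io1 * Y.map io2) K L * (Z.map io3) I J := by
  simp only [Matrix.mul_apply, Finset.sum_mul, Finset.mul_sum, Matrix.map_apply]
  refine Finset.sum_congr rfl fun a _ => ?_
  rw [← mul_assoc, io31, mul_assoc, io32, mul_assoc]

section
variable {X Y Z : M7}

lemma blk_tri (hX : Blk X) (hY : Blk Y) (hZ : Blk Z) : Blk (tri X Y Z) :=
  ((hX.map io1).mul (hY.map io2)).mul (hZ.map io3)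

lemma inv_tri (bX : Blk X) (bY : Blk Y) (hX : IsInv3 X) (hY : IsInv3 Y) (hZ : IsInv3 Z) :
    IsInv3 (tri X Y Z) :=
  ((hX.map io1).mul (hY.map io2) (bX.map io1) (tri_comm21 X Y)).mul (hZ.map io3)
    ((bX.map io1).mul (bY.map io2)) (tri_comm3 X Y Z)

lemma rtt_tri (bX : Blk X) (bY : Blk Y) (hX : RTT (T3 X)) (hY : RTT (T3 Y)) (hZ : RTT (T3 Z)) :
    RTT (T3 (tri X Y Z)) := by
  have h12 : RTT (T3 (X.map io1 * Y.map io2)) := by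
    rw [(bX.map io1).T3_mul]
    exact (hX.map io1).mul (hY.map io2) fun i j k l => tri_comm21 X Y _ _ _ _
  rw [tri, ((bX.map io1).mul (bY.map io2)).T3_mul]
  exact h12.mul (hZ.map io3) fun i j k l => tri_comm3 X Y Z _ _ _ _
end

/-! ### basis and coordinates -/

def ee (i j k : ℕ) : F3 := ket i ⊗ₜ[Fq] (ket j ⊗ₜ[Fq] ket k)

def B3 : Module.Basis (ℕ × ℕ × ℕ) Fq F3 :=
  (Finsupp.basisSingleOne (R := Fq) (ι := ℕ)).tensorProduct
    ((Finsupp.basisSingleOne (R := Fq) (ι := ℕ)).tensorProduct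
      (Finsupp.basisSingleOne (R := Fq) (ι := ℕ)))

lemma B3_apply (i j k : ℕ) : B3 (i, j, k) = ee i j k := by
  simp [B3, ee, ket, Module.Basis.tensorProduct_apply]

def cf (a b c : ℕ) : F3 →ₗ[Fq] Fq := B3.coord (a, b, c)

lemma cf_ee (a b c i j k : ℕ) : cf a b c (ee i j k) = if i = a ∧ j = b ∧ k = c then 1 else 0 := by
  rw [← B3_apply, cf, Module.Basis.coord_apply, Module.Basis.repr_self, Finsupp.single_apply]
  simp

lemma cf_ext {v w : F3} (h : ∀ a b c, cf a b c v = cf a b c w) : v = w :=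
  B3.ext_elem fun ⟨a, b, c⟩ => h a b c

lemma lin_ext {M : Type*} [AddCommMonoid M] [Module Fq M] {f g : F3 →ₗ[Fq] M}
    (h : ∀ i j k, f (ee i j k) = g (ee i j k)) : f = g :=
  B3.ext fun ⟨i, j, k⟩ => by simpa [B3_apply] using h i j k

lemma sub_top {N : Submodule Fq F3} (h : ∀ i j k, ee i j k ∈ N) : N = ⊤ := by
  rw [eq_top_iff, ← B3.span_eq, Submodule.span_le]
  rintro _ ⟨⟨i, j, k⟩, rfl⟩
  rw [B3_apply]
  exact h i j k

lemma tri_ee (X Y Z : M7) (I J : Fin 7) (i j k : ℕ) :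
    tri X Y Z I J (ee i j k)
      = ∑ K, ∑ L, X I K (ket i) ⊗ₜ[Fq] (Y K L (ket j) ⊗ₜ[Fq] Z L J (ket k)) := by
  simp [tri_apply, ee, LinearMap.sum_apply]

section
variable (α₁ β₁ μ₁ ν₁ κ₁ σ₁ α₂ β₂ μ₂ ν₂ κ₂ σ₂ : Fq)

/-- π₁₂₁ -/
def V : Matrix (Fin 7) (Fin 7) EE :=
  tri (Q1 α₁ β₁ μ₁ ν₁ κ₁ σ₁) (Q2 α₂ β₂ μ₂ ν₂ κ₂ σ₂) (Q1 α₁ β₁ μ₁ ν₁ κ₁ σ₁)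
/-- π₂₁₂ -/
def U : Matrix (Fin 7) (Fin 7) EE :=
  tri (Q2 α₂ β₂ μ₂ ν₂ κ₂ σ₂) (Q1 α₁ β₁ μ₁ ν₁ κ₁ σ₁) (Q2 α₂ β₂ μ₂ ν₂ κ₂ σ₂)

local notation "VV" => V α₁ β₁ μ₁ ν₁ κ₁ σ₁ α₂ β₂ μ₂ ν₂ κ₂ σ₂
local notation "UU" => U α₁ β₁ μ₁ ν₁ κ₁ σ₁ α₂ β₂ μ₂ ν₂ κ₂ σ₂

lemma V21 (i j k : ℕ) : VV 2 1 (ee i j k) = (κ₁ * β₂ * ν₁ * q ^ (2 * j)) • ee i j (k + 1) := by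
  rw [V, tri_ee]
  simp [Fin.sum_univ_seven, Q1, Q2, pi1, pi2, K2_ket, Ap_ket, Am_ket, ee, 
    ← TensorProduct.smul_tmul', TensorProduct.tmul_smul, smul_smul]
  try (congr 1; ring)

lemma V22 (i j k : ℕ) : VV 2 2 (ee i j k) = (κ₁ * ν₂ * κ₁) • ee i (j + 1) k := by
  rw [V, tri_ee]
  simp [Fin.sum_univ_seven, Q1, Q2, pi1, pi2, K2_ket, Ap_ket, Am_ket, ee, 
    ← TensorProduct.smul_tmul', TensorProduct.tmul_smul, smul_smul]
  try (congr 1; ring)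

lemma V12 (i j k : ℕ) : VV 1 2 (ee i j k) = (κ₁ * ν₁ * α₂ * q ^ (2 * j)) • ee (i + 1) j k := by
  rw [V, tri_ee]
  simp [Fin.sum_univ_seven, Q1, Q2, pi1, pi2, K2_ket, Ap_ket, Am_ket, ee, 
    ← TensorProduct.smul_tmul', TensorProduct.tmul_smul, smul_smul]
  try (congr 1; ring)

lemma U21 (i j k : ℕ) : UU 2 1 (ee i j k)
    = (β₂ * ν₁ * μ₂ * q ^ (2 * i) * (1 - q ^ (4 * k))) • ee i (j + 1) (k - 1)
      + (ν₂ * κ₁ * β₂ * q ^ (2 * k)) • ee (i + 1) j k := by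
  rw [U, tri_ee]
  simp [Fin.sum_univ_seven, Q1, Q2, pi1, pi2, K2_ket, Ap_ket, Am_ket, ee, 
    ← TensorProduct.smul_tmul', TensorProduct.tmul_smul, smul_smul]
  congr 2 <;> ring

lemma U22 (i j k : ℕ) : UU 2 2 (ee i j k)
    = (β₂ * ν₁ * α₂ * q ^ (2 * i) * q ^ (2 * k)) • ee i (j + 1) k
      + (ν₂ * κ₁ * ν₂) • ee (i + 1) j (k + 1) := by
  rw [U, tri_ee]
  simp [Fin.sum_univ_seven, Q1, Q2, pi1, pi2, K2_ket, Ap_ket, Am_ket, ee, 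
    ← TensorProduct.smul_tmul', TensorProduct.tmul_smul, smul_smul]
  congr 2 <;> ring

lemma U12 (i j k : ℕ) : UU 1 2 (ee i j k)
    = (μ₂ * ν₁ * α₂ * (1 - q ^ (4 * i)) * q ^ (2 * k)) • ee (i - 1) (j + 1) k
      + (α₂ * κ₁ * ν₂ * q ^ (2 * i)) • ee i j (k + 1) := by
  rw [U, tri_ee]
  simp [Fin.sum_univ_seven, Q1, Q2, pi1, pi2, K2_ket, Ap_ket, Am_ket, ee, 
    ← TensorProduct.smul_tmul', TensorProduct.tmul_smul, smul_smul]
  congr 2 <;> ring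

/-- the action of the remaining entries on the vacuum -/
lemma V_vac : VV 0 0 (ee 0 0 0) = 0 ∧ VV 0 1 (ee 0 0 0) = 0 ∧ VV 1 0 (ee 0 0 0) = 0 ∧
    VV 0 2 (ee 0 0 0) = (α₁ * α₂ * κ₁) • ee 0 0 0 ∧ VV 2 0 (ee 0 0 0) = (κ₁ * β₂ * β₁) • ee 0 0 0 ∧
    VV 1 1 (ee 0 0 0) = (β₁ * κ₂ * α₁) • ee 0 0 0 := by
  simp only [V, tri_ee]
  simp [Fin.sum_univ_seven, Q1, Q2, pi1, pi2, K2_ket, Ap_ket, Am_ket, ee, 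
    ← TensorProduct.smul_tmul', TensorProduct.tmul_smul, smul_smul]
  refine ⟨?_, ?_, ?_⟩ <;> congr 1 <;> ring

lemma U_vac : UU 0 0 (ee 0 0 0) = 0 ∧ UU 0 1 (ee 0 0 0) = 0 ∧ UU 1 0 (ee 0 0 0) = 0 ∧
    UU 0 2 (ee 0 0 0) = (κ₂ * α₁ * α₂) • ee 0 0 0 ∧ UU 2 0 (ee 0 0 0) = (β₂ * β₁ * κ₂) • ee 0 0 0 ∧
    UU 1 1 (ee 0 0 0) = (α₂ * κ₁ * β₂) • ee 0 0 0 := by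
  simp only [U, tri_ee]
  simp [Fin.sum_univ_seven, Q1, Q2, pi1, pi2, K2_ket, Ap_ket, Am_ket, ee, 
    ← TensorProduct.smul_tmul', TensorProduct.tmul_smul, smul_smul]
  refine ⟨?_, ?_, ?_⟩ <;> congr 1 <;> ring

/-- dual block: creators of 212 -/
lemma U_dual (i j k : ℕ) : UU 6 6 (ee i j k) = (κ₂⁻¹ * μ₁⁻¹ * κ₂⁻¹) • ee i (j + 1) k ∧
    UU 6 5 (ee i j k) = (κ₂⁻¹ * (q ^ 2 * α₁⁻¹) * μ₂⁻¹ * q ^ (2 * j)) • ee i j (k + 1) ∧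
    UU 5 6 (ee i j k) = (μ₂⁻¹ * (q ^ 2 * β₁⁻¹) * κ₂⁻¹ * q ^ (2 * j)) • ee (i + 1) j k := by
  simp only [U, tri_ee]
  simp [Fin.sum_univ_seven, Q1, Q2, pi1, pi2, K2_ket, Ap_ket, Am_ket, ee, 
    ← TensorProduct.smul_tmul', TensorProduct.tmul_smul, smul_smul]
  refine ⟨?_, ?_, ?_⟩ <;> congr 1 <;> ring

/-- dual block: annihilators of 121 -/
lemma V_dual (i j k : ℕ) :
    VV 4 4 (ee i j k) = (κ₁⁻¹ * ν₂⁻¹ * κ₁⁻¹ * (1 - q ^ (4 * j))) • ee i (j - 1) k ∧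
    VV 4 5 (ee i j k) = (κ₁⁻¹ * (q ^ 2 * β₂⁻¹) * ν₁⁻¹ * q ^ (2 * j) * (1 - q ^ (4 * k))) • ee i j (k - 1) ∧
    VV 5 4 (ee i j k) = (ν₁⁻¹ * (q ^ 2 * α₂⁻¹) * κ₁⁻¹ * q ^ (2 * j) * (1 - q ^ (4 * i))) • ee (i - 1) j k := by
  simp only [V, tri_ee]
  simp [Fin.sum_univ_seven, Q1, Q2, pi1, pi2, K2_ket, Ap_ket, Am_ket, ee, 
    ← TensorProduct.smul_tmul', TensorProduct.tmul_smul, smul_smul]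
  refine ⟨?_, ?_, ?_⟩ <;> congr 1 <;> ring

end

/-! ### Part 3: the recursion relations of the matrix elements -/

lemma q_pow_ne {n : ℕ} (hn : n ≠ 0) : (q : Fq) ^ n ≠ 1 := by
  intro h
  have h1 : algebraMap (Polynomial ℚ) Fq (Polynomial.X ^ n) = algebraMap (Polynomial ℚ) Fq 1 := by
    rw [map_pow, RatFunc.algebraMap_X, map_one]; exact h
  have h2 := RatFunc.algebraMap_injective ℚ h1
  have h3 := congrArg Polynomial.natDegree h2
  rw [Polynomial.natDegree_X_pow, Polynomial.natDegree_one] at h3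
  exact hn h3

lemma one_sub_q_ne (l : ℕ) : (1 : Fq) - q ^ (4 * (l + 1)) ≠ 0 :=
  sub_ne_zero.mpr (Ne.symm (q_pow_ne (by omega)))

/-- the q-factorial in base q⁴ and its inverse -/
def gf (n : ℤ) : Fq := qfac (q ^ 4) n
def iq (n : ℤ) : Fq := (qfac (q ^ 4) n)⁻¹

lemma gf_ne {n : ℤ} (hn : 0 ≤ n) : gf n ≠ 0 := by
  rw [gf, qfac, if_pos hn, Finset.prod_ne_zero_iff]
  intro l _
  rw [← pow_mul]
  exact one_sub_q_ne l

lemma gf_iq {n : ℤ} (hn : 0 ≤ n) : gf n * iq n = 1 := mul_inv_cancel₀ (gf_ne hn)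

lemma iq_neg {n : ℤ} (hn : n < 0) : iq n = 0 := by
  rw [iq, qfac, if_neg (by omega), inv_zero]

lemma gf_zero : gf 0 = 1 := by simp [gf, qfac]
lemma iq_zero : iq 0 = 1 := by simp [iq, qfac]

lemma gf_succ {n : ℤ} (hn : 0 ≤ n) : gf (n + 1) = (1 - q ^ (4 * (n + 1))) * gf n := by
  lift n to ℕ using hn
  have h1 : ((n : ℤ) + 1).toNat = n + 1 := by omega
  rw [gf, gf, qfac, qfac, if_pos (by omega), if_pos (by omega), h1, Int.toNat_natCast,
    Finset.prod_range_succ, mul_comm, ← pow_mul]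
  congr 2

lemma iq_pred (n : ℤ) : iq (n - 1) = (1 - q ^ (4 * n)) * iq n := by
  rcases lt_trichotomy n 0 with h | h | h
  · rw [iq_neg h, iq_neg (by omega), mul_zero]
  · subst h
    rw [iq_neg (by omega)]; simp
  · have h1 := gf_succ (n := n - 1) (by omega)
    rw [sub_add_cancel] at h1
    have h2 := gf_ne (n := n) (by omega)
    have h3 := gf_ne (n := n - 1) (by omega)
    have h4 : iq n = (gf n)⁻¹ := rfl
    have h5 : iq (n - 1) = (gf (n - 1))⁻¹ := rfl
    rw [h4, h5]
    rw [h1] at h2 ⊢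
    have h6 := left_ne_zero_of_mul h2
    field_simp

/-- the summand of the matrix element -/
def tt (m b c n j i : ℤ) : Fq :=
  (-1) ^ (b - m) * q ^ (2 * n * (c - j) + 2 * (i + 1) * (b - m) + 2 * m * (m - i)) *
    (gf n * gf j * gf (c + m) * (iq m * iq (b - m) * iq (n - m) * iq (j - (b - m)) * iq c))

def Hs (b c n j i : ℕ) : Fq := ∑ m ∈ Finset.range (b + 1), tt m b c n j i

lemma Scoef_eq (a b c n j i : ℕ) : Scoef a b c n j i =
    (if n + j = a + b then 1 else 0) * (if j + i = b + c then 1 else 0) * Hs b c n j i := by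
  rw [Scoef, Hs]
  congr 1
  refine Finset.sum_congr rfl fun m hm => ?_
  rw [Finset.mem_range] at hm
  have h : ((b : ℤ) - (m : ℤ)) = ((b - m : ℕ) : ℤ) := by omega
  rw [tt, div_eq_mul_inv, mul_inv, mul_inv, mul_inv, mul_inv, h, zpow_natCast]
  rfl

lemma tt_rec {m b c n j i a : ℤ} (hc : 0 ≤ c) (hn : 0 ≤ n) (h1 : n + 1 + j = a + b)
    (h2 : j + i = b + c) :
    q ^ (2 * j) * tt m b c (n + 1) j i
      = q ^ (2 * a) * (1 - q ^ (4 * (c + 1))) * tt (m - 1) (b - 1) (c + 1) n j i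
        + q ^ (2 * c) * tt m b c n j i := by
  have hq := q_ne
  have e1 : iq (m - 1) = (1 - q ^ (4 * m)) * iq m := iq_pred m
  have e2 : iq (n - m) = (1 - q ^ (4 * (n + 1 - m))) * iq (n + 1 - m) := by
    rw [← iq_pred]; congr 1; ring
  have e3 : iq c = (1 - q ^ (4 * (c + 1))) * iq (c + 1) := by
    rw [← iq_pred]; congr 1; ring
  have e4 := gf_succ hn
  have f1 : b - 1 - (m - 1) = b - m := by ring
  have f2 : c + 1 + (m - 1) = c + m := by ring
  have f3 : n - (m - 1) = n + 1 - m := by ring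
  set E : ℤ := 2 * n * (c - j) + 2 * (i + 1) * (b - m) + 2 * m * (m - i) with hE
  have g1 : q ^ (2 * j) * q ^ (2 * (n + 1) * (c - j) + 2 * (i + 1) * (b - m) + 2 * m * (m - i))
      = q ^ (2 * c) * q ^ E := by
    rw [← zpow_add₀ hq, ← zpow_add₀ hq]; congr 1; rw [hE]; ring
  have g2 : q ^ (2 * a) * q ^ (2 * n * (c + 1 - j) + 2 * (i + 1) * (b - m)
      + 2 * (m - 1) * (m - 1 - i)) = q ^ (2 * c) * q ^ E * q ^ (4 * (n + 1 - m)) := by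
    rw [← zpow_add₀ hq, ← zpow_add₀ hq, ← zpow_add₀ hq]; congr 1; rw [hE]
    have : a = n + 1 + j - b := by omega
    have : i = b + c - j := by omega
    subst_vars; ring
  have g3 : q ^ (4 * (n + 1)) = q ^ (4 * (n + 1 - m)) * q ^ (4 * m) := by
    rw [← zpow_add₀ hq]; congr 1; ring
  have l1 : q ^ (2 * j) * tt m b c (n + 1) j i
      = (-1) ^ (b - m) * (q ^ (2 * c) * q ^ E) * ((1 - q ^ (4 * (n + 1 - m)) * q ^ (4 * m)) * gf n * gf j
        * gf (c + m) * (iq m * iq (b - m) * iq (n + 1 - m) * iq (j - (b - m)) * iq c)) := by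
    rw [← g1, ← g3, ← e4, tt]; ring
  have l2 : q ^ (2 * a) * (1 - q ^ (4 * (c + 1))) * tt (m - 1) (b - 1) (c + 1) n j i
      = (-1) ^ (b - m) * (q ^ (2 * c) * q ^ E * q ^ (4 * (n + 1 - m))) * (gf n * gf j
        * gf (c + m) * ((1 - q ^ (4 * m)) * iq m * iq (b - m) * iq (n + 1 - m) * iq (j - (b - m)) * iq c)) := by
    rw [← g2, ← e1, e3, tt, f1, f2, f3]; ring
  have l3 : q ^ (2 * c) * tt m b c n j i
      = (-1) ^ (b - m) * (q ^ (2 * c) * q ^ E) * (gf n * gf j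
        * gf (c + m) * (iq m * iq (b - m) * ((1 - q ^ (4 * (n + 1 - m))) * iq (n + 1 - m)) * iq (j - (b - m)) * iq c)) := by
    rw [← e2, tt]; ring
  rw [l1, l2, l3]; ring

lemma tt_neg {m b c n j i : ℤ} (h : m < 0 ∨ n < m ∨ j < b - m) : tt m b c n j i = 0 := by
  rw [tt]
  rcases h with h | h | h
  · rw [iq_neg h]; ring
  · rw [iq_neg (show n - m < 0 by omega)]; ring
  · rw [iq_neg (show j - (b - m) < 0 by omega)]; ring

lemma Hs_zero {b c n j i : ℕ} (h : n + j < b) : Hs b c n j i = 0 := by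
  refine Finset.sum_eq_zero fun m _ => tt_neg ?_
  omega

lemma Hs_rec_zero {c n j i a : ℕ} (h1 : n + 1 + j = a + 0) (h2 : j + i = 0 + c) :
    q ^ (2 * j) * Hs 0 c (n + 1) j i = q ^ (2 * c) * Hs 0 c n j i := by
  simp only [Hs, zero_add, Finset.sum_range_one]
  have := tt_rec (m := 0) (b := 0) (c := c) (n := n) (j := j) (i := i) (a := a)
    (by omega) (by omega) (by omega) (by omega)
  rw [tt_neg (m := 0 - 1) (by omega), mul_zero, zero_add] at this
  exact_mod_cast this

lemma Hs_rec_succ {b c n j i a : ℕ} (h1 : n + 1 + j = a + (b + 1)) (h2 : j + i = b + 1 + c) :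
    q ^ (2 * j) * Hs (b + 1) c (n + 1) j i
      = q ^ (2 * a) * (1 - q ^ (4 * (c + 1))) * Hs b (c + 1) n j i
        + q ^ (2 * c) * Hs (b + 1) c n j i := by
  have key : ∀ m : ℤ, q ^ (2 * j) * tt m (b + 1 : ℕ) c (n + 1 : ℕ) j i
      = q ^ (2 * a) * (1 - q ^ (4 * (c + 1))) * tt (m - 1) b (c + 1 : ℕ) n j i
        + q ^ (2 * c) * tt m (b + 1 : ℕ) c n j i := by
    intro m
    have := tt_rec (m := m) (b := (b + 1 : ℕ)) (c := c) (n := n) (j := j) (i := i) (a := a)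
      (by omega) (by omega) (by omega) (by omega)
    push_cast at this ⊢
    rw [add_sub_cancel_right] at this
    exact_mod_cast this
  have hs : Hs b (c + 1) n j i
      = ∑ m ∈ Finset.range (b + 1 + 1), tt ((m : ℤ) - 1) b (c + 1 : ℕ) n j i := by
    rw [Finset.sum_range_succ', tt_neg (m := ((0 : ℕ) : ℤ) - 1) (by omega), add_zero, Hs]
    refine Finset.sum_congr rfl fun m _ => ?_
    congr 1; omega
  rw [hs, Hs, Hs, Finset.mul_sum, Finset.mul_sum, Finset.mul_sum, ← Finset.sum_add_distrib]
  exact Finset.sum_congr rfl fun m _ => key m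

lemma Hs_n0 (b c j i : ℕ) : Hs b c 0 j i
    = (-1) ^ b * q ^ (2 * (i + 1) * b) * gf j * iq b * iq ((j : ℤ) - b) := by
  rw [Hs, Finset.sum_eq_single 0]
  · rw [tt]
    simp only [Nat.cast_zero, sub_zero, add_zero, gf_zero, iq_zero, zpow_natCast]
    have h := gf_iq (n := c) (by omega)
    have e : q ^ (2 * 0 * ((c : ℤ) - j) + 2 * ((i : ℤ) + 1) * b + 2 * 0 * (0 - (i : ℤ)))
        = q ^ (2 * (i + 1) * b) := by
      rw [← zpow_natCast]; congr 1; push_cast; ring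
    rw [e]
    linear_combination ((-1) ^ b * q ^ (2 * (i + 1) * b) * gf j * iq b * iq ((j : ℤ) - b)) * h
  · intro m _ hm
    exact tt_neg (by omega)
  · simp

lemma Hs_j_zero {c j i a : ℕ} (h1 : j + 1 = a + 0) (h2 : j + 1 + i = 0 + c) :
    Hs 0 c 0 (j + 1) i = Hs 0 (c - 1) 0 j i := by
  rw [Hs_n0, Hs_n0]
  have h := gf_iq (n := j) (by omega)
  have h' := gf_iq (n := (j + 1 : ℕ)) (by omega)
  simp only [pow_zero, mul_zero, Nat.cast_zero, sub_zero, iq_zero]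
  linear_combination h' - h

lemma Hs_j_succ {b c j i a : ℕ} (h1 : j + 1 = a + (b + 1)) (h2 : j + 1 + i = b + 1 + c) :
    Hs (b + 1) c 0 (j + 1) i = - q ^ (2 + 2 * a + 2 * c) * Hs b c 0 j i
      + Hs (b + 1) (c - 1) 0 j i := by
  rw [Hs_n0, Hs_n0, Hs_n0]
  have hq := q_ne
  have hj : j = a + b := by omega
  have hc : c = a + i := by omega
  have e1 := gf_succ (n := j) (by omega)
  have e2 : iq b = (1 - q ^ (4 * ((b : ℤ) + 1))) * iq (b + 1) := by
    rw [← iq_pred]; congr 1; ring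
  have e3 : iq ((j : ℤ) - (b + 1 : ℕ)) = (1 - q ^ (4 * (a : ℤ))) * iq a := by
    rw [← iq_pred]; congr 1; omega
  have e4 : ((j : ℤ) - b) = a := by omega
  have e5 : (((j + 1 : ℕ) : ℤ) - (b + 1 : ℕ)) = a := by omega
  rw [e3, e4, e5]
  push_cast
  rw [e1, e2]
  have z1 : q ^ (4 * ((j : ℤ) + 1)) = q ^ (4 * a) * q ^ (4 * (b + 1)) := by
    rw [← pow_add, ← zpow_natCast]; congr 1; subst hj; push_cast; ring
  have z2 : q ^ (4 * ((b : ℤ) + 1)) = q ^ (4 * (b + 1)) := by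
    rw [← zpow_natCast]; congr 1
  have z3 : q ^ (4 * (a : ℤ)) = q ^ (4 * a) := by
    rw [← zpow_natCast]; congr 1
  rw [z1, z2, z3, hc]
  ring

/-! ### Part 4: recursion relations for Φ -/

lemma Sfull_zero {α₁ β₁ μ₁ μ₂ σ₁ : Fq} {a b c i j k : ℕ} (h : ¬ (i + j = a + b ∧ j + k = b + c)) :
    Sfull α₁ β₁ μ₁ μ₂ σ₁ a b c i j k = 0 := by
  rw [Sfull, Scoef]
  by_cases h1 : i + j = a + b
  · rw [if_neg (fun h2 => h ⟨h1, h2⟩)]; simp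
  · rw [if_neg h1]; simp

lemma Sfull_eq {α₁ β₁ μ₁ μ₂ σ₁ : Fq} {a b c i j k : ℕ} (h1 : i + j = a + b) (h2 : j + k = b + c) :
    Sfull α₁ β₁ μ₁ μ₂ σ₁ a b c i j k =
      (-(α₁ * β₁) * q ^ (-2 : ℤ)) ^ j * μ₁ ^ ((a : ℤ) - (j : ℤ) + (k : ℤ)) *
        μ₂ ^ ((b : ℤ) - (a : ℤ) - (k : ℤ)) * σ₁ ^ (b + j) * Hs b c i j k := by
  rw [Sfull, Scoef_eq, if_pos h1, if_pos h2]; ring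

lemma finsum_cf (S : ℕ → ℕ → ℕ → Fq) (N : ℕ)
    (hS : ∀ a b c, N ≤ a ∨ N ≤ b ∨ N ≤ c → S a b c = 0) (a b c : ℕ) :
    cf a b c (∑ᶠ a : ℕ, ∑ᶠ b : ℕ, ∑ᶠ c : ℕ, S a b c • ee a b c) = S a b c := by
  have h3 : ∀ a b : ℕ, ∑ᶠ c : ℕ, S a b c • ee a b c
      = ∑ c ∈ Finset.range N, S a b c • ee a b c := fun a b => by
    refine finsum_eq_sum_of_support_subset _ fun c hc => ?_
    by_contra h
    simp only [Finset.coe_range, Set.mem_Iio, not_lt] at h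
    exact hc (by simp [hS a b c (by omega)])
  have h2 : ∀ a : ℕ, ∑ᶠ b : ℕ, ∑ᶠ c : ℕ, S a b c • ee a b c
      = ∑ b ∈ Finset.range N, ∑ c ∈ Finset.range N, S a b c • ee a b c := fun a => by
    simp only [h3]
    refine finsum_eq_sum_of_support_subset _ fun b hb => ?_
    by_contra h
    simp only [Finset.coe_range, Set.mem_Iio, not_lt] at h
    exact hb (Finset.sum_eq_zero fun c _ => by simp [hS a b c (by omega)])
  have h1 : ∑ᶠ a : ℕ, ∑ᶠ b : ℕ, ∑ᶠ c : ℕ, S a b c • ee a b c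
      = ∑ a ∈ Finset.range N, ∑ b ∈ Finset.range N, ∑ c ∈ Finset.range N,
        S a b c • ee a b c := by
    simp only [h2]
    refine finsum_eq_sum_of_support_subset _ fun a ha => ?_
    by_contra h
    simp only [Finset.coe_range, Set.mem_Iio, not_lt] at h
    exact ha (Finset.sum_eq_zero fun b _ => Finset.sum_eq_zero fun c _ => by
      simp [hS a b c (by omega)])
  rw [h1]
  simp only [map_sum, map_smul, cf_ee, smul_eq_mul]
  by_cases h : a < N ∧ b < N ∧ c < N
  · rw [Finset.sum_eq_single a, Finset.sum_eq_single b, Finset.sum_eq_single c]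
    · simp
    · intro x _ hx; simp [hx]
    · intro hx; simp at hx; omega
    · intro x _ hx; simp [hx]
    · intro hx; simp at hx; omega
    · intro x _ hx; simp [hx]
    · intro hx; simp at hx; omega
  · rw [hS a b c (by omega)]
    refine Finset.sum_eq_zero fun x hx => Finset.sum_eq_zero fun y hy =>
      Finset.sum_eq_zero fun z hz => ?_
    simp only [Finset.mem_range] at hx hy hz
    rw [if_neg (by omega), mul_zero]

/-- all data of the theorem, after identifying the signs -/
structure Dat (α₁ β₁ μ₁ ν₁ α₂ β₂ μ₂ ν₂ σ : Fq) (Φ : EE) : Prop where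
  α₁0 : α₁ ≠ 0
  β₁0 : β₁ ≠ 0
  μ₁0 : μ₁ ≠ 0
  ν₁0 : ν₁ ≠ 0
  α₂0 : α₂ ≠ 0
  β₂0 : β₂ ≠ 0
  μ₂0 : μ₂ ≠ 0
  ν₂0 : ν₂ ≠ 0
  σ2 : σ * σ = 1
  rel1 : α₁ * β₁ = -q ^ 2 * (μ₁ * ν₁)
  rel2 : α₂ * β₂ = -q ^ 2 * (μ₂ * ν₂)
  par : α₁ * β₁ = α₂ * β₂
  co : ∀ a b c i j k, cf a b c (Φ (ee i j k)) = Sfull α₁ β₁ μ₁ μ₂ σ a b c k j i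

section
variable {α₁ β₁ μ₁ ν₁ α₂ β₂ μ₂ ν₂ σ : Fq} {Φ : EE}

local notation "VV" => V α₁ β₁ μ₁ ν₁ σ σ α₂ β₂ μ₂ ν₂ σ σ
local notation "UU" => U α₁ β₁ μ₁ ν₁ σ σ α₂ β₂ μ₂ ν₂ σ σ

lemma Dat.σ0 (D : Dat α₁ β₁ μ₁ ν₁ α₂ β₂ μ₂ ν₂ σ Φ) : σ ≠ 0 := by
  intro h; have := D.σ2; rw [h] at this; simp at this

lemma Dat.mn (D : Dat α₁ β₁ μ₁ ν₁ α₂ β₂ μ₂ ν₂ σ Φ) : μ₁ * ν₁ = μ₂ * ν₂ := by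
  have h := D.par
  rw [D.rel1, D.rel2] at h
  exact mul_left_cancel₀ (neg_ne_zero.mpr (pow_ne_zero 2 q_ne)) h

/-- the weight -/
def Wt (p μ₁ μ₂ σ : Fq) (a b i j : ℕ) : Fq :=
  p ^ j * μ₁ ^ ((a : ℤ) - (j : ℤ) + (i : ℤ)) * μ₂ ^ ((b : ℤ) - (a : ℤ) - (i : ℤ)) * σ ^ (b + j)

lemma Dat.wt (D : Dat α₁ β₁ μ₁ ν₁ α₂ β₂ μ₂ ν₂ σ Φ) {a b c i j k : ℕ} (h1 : k + j = a + b)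
    (h2 : j + i = b + c) :
    cf a b c (Φ (ee i j k)) = Wt (μ₁ * ν₁) μ₁ μ₂ σ a b i j * Hs b c k j i := by
  rw [D.co, Sfull_eq h1 h2, Wt]
  have : -(α₁ * β₁) * q ^ (-2 : ℤ) = μ₁ * ν₁ := by
    have hq := q_ne
    rw [D.rel1, zpow_neg]
    field_simp
  rw [this]

lemma Dat.wt0 (D : Dat α₁ β₁ μ₁ ν₁ α₂ β₂ μ₂ ν₂ σ Φ) {a b c i j k : ℕ}
    (h : ¬ (k + j = a + b ∧ j + i = b + c)) : cf a b c (Φ (ee i j k)) = 0 := by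
  rw [D.co, Sfull_zero h]

lemma Wt_b {p μ₁ μ₂ σ : Fq} (h : μ₂ ≠ 0) (a b i j : ℕ) :
    Wt p μ₁ μ₂ σ a (b + 1) i j = Wt p μ₁ μ₂ σ a b i j * μ₂ * σ := by
  have e : ((b + 1 : ℕ) : ℤ) - a - i = (b : ℤ) - a - i + 1 := by push_cast; ring
  rw [Wt, Wt, e, zpow_add_one₀ h, show b + 1 + j = b + j + 1 by ring, pow_succ]; ring

lemma Wt_a {p μ₁ μ₂ σ : Fq} (h1 : μ₁ ≠ 0) (h : μ₂ ≠ 0) (a b i j : ℕ) :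
    Wt p μ₁ μ₂ σ (a + 1) b i j * μ₂ = Wt p μ₁ μ₂ σ a b i j * μ₁ := by
  have e : ((a + 1 : ℕ) : ℤ) - j + i = (a : ℤ) - j + i + 1 := by push_cast; ring
  have e' : (b : ℤ) - a - i = (b : ℤ) - (a + 1 : ℕ) - i + 1 := by push_cast; ring
  rw [Wt, Wt, e, e', zpow_add_one₀ h, zpow_add_one₀ h1]; ring

lemma Wt_j {p μ₁ μ₂ σ : Fq} (h1 : μ₁ ≠ 0) (a b i j : ℕ) :
    Wt p μ₁ μ₂ σ a b i (j + 1) * μ₁ = Wt p μ₁ μ₂ σ a b i j * p * σ := by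
  have e : (a : ℤ) - j + i = (a : ℤ) - (j + 1 : ℕ) + i + 1 := by push_cast; ring
  rw [Wt, Wt, e, zpow_add_one₀ h1, show b + (j + 1) = b + j + 1 by ring, pow_succ, pow_succ]; ring

/-! coordinates of the action of the creators -/

lemma cf_U21 (a b c : ℕ) (w : F3) : cf a b c (UU 2 1 w)
    = β₂ * ν₁ * μ₂ * q ^ (2 * a) * (1 - q ^ (4 * (c + 1))) *
        (if b = 0 then 0 else cf a (b - 1) (c + 1) w)
      + ν₂ * σ * β₂ * q ^ (2 * c) * (if a = 0 then 0 else cf (a - 1) b c w) := by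
  have : (cf a b c).comp (UU 2 1) = (β₂ * ν₁ * μ₂ * q ^ (2 * a) * (1 - q ^ (4 * (c + 1)))) •
        (if b = 0 then 0 else cf a (b - 1) (c + 1))
      + (ν₂ * σ * β₂ * q ^ (2 * c)) • (if a = 0 then 0 else cf (a - 1) b c) := by
    refine lin_ext fun i j k => ?_
    rw [LinearMap.comp_apply, U21]
    rcases Nat.eq_zero_or_pos k with hk | hk
    · subst hk
      cases a <;> cases b <;> simp [cf_ee] <;> split_ifs <;> first | rfl | omega | (rename_i h; obtain ⟨rfl, rfl, rfl⟩ := h; simp; done) | (simp_all; done)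
    · obtain ⟨k, rfl⟩ := Nat.exists_eq_succ_of_ne_zero hk.ne'
      cases a <;> cases b <;> simp [cf_ee] <;> split_ifs <;> first | rfl | omega | (rename_i h; obtain ⟨rfl, rfl, rfl⟩ := h; simp; done) | (simp_all; done)
  have h := LinearMap.congr_fun this w
  rw [LinearMap.comp_apply] at h
  rw [h]
  split_ifs <;> simp

lemma cf_U22 (a b c : ℕ) (w : F3) : cf a b c (UU 2 2 w)
    = β₂ * ν₁ * α₂ * q ^ (2 * a) * q ^ (2 * c) * (if b = 0 then 0 else cf a (b - 1) c w)
      + ν₂ * σ * ν₂ * (if a = 0 ∨ c = 0 then 0 else cf (a - 1) b (c - 1) w) := by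
  have : (cf a b c).comp (UU 2 2) = (β₂ * ν₁ * α₂ * q ^ (2 * a) * q ^ (2 * c)) •
        (if b = 0 then 0 else cf a (b - 1) c)
      + (ν₂ * σ * ν₂) • (if a = 0 ∨ c = 0 then 0 else cf (a - 1) b (c - 1)) := by
    refine lin_ext fun i j k => ?_
    rw [LinearMap.comp_apply, U22]
    cases a <;> cases b <;> cases c <;> simp [cf_ee] <;> split_ifs <;> first | rfl | omega | (rename_i h; obtain ⟨rfl, rfl, rfl⟩ := h; simp; done) | (simp_all; done)
  have h := LinearMap.congr_fun this w
  rw [LinearMap.comp_apply] at h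
  rw [h]
  split_ifs <;> simp

lemma Dat.R1 (D : Dat α₁ β₁ μ₁ ν₁ α₂ β₂ μ₂ ν₂ σ Φ) (i j k : ℕ) :
    (σ * β₂ * ν₁ * q ^ (2 * j)) • Φ (ee i j (k + 1)) = UU 2 1 (Φ (ee i j k)) := by
  refine cf_ext fun a b c => ?_
  rw [cf_U21, map_smul, smul_eq_mul]
  by_cases h : k + 1 + j = a + b ∧ j + i = b + c
  · obtain ⟨h1, h2⟩ := h
    have hm := D.mn
    have hs := D.σ2
    have m1 := D.μ₁0
    have m2 := D.μ₂0
    have ha : ν₂ * (if a = 0 then 0 else cf (a - 1) b c (Φ (ee i j k)))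
        = ν₁ * Wt (μ₁ * ν₁) μ₁ μ₂ σ a b i j * Hs b c k j i := by
      cases a with
      | zero => rw [if_pos rfl, Hs_zero (by omega)]; ring
      | succ a =>
        rw [if_neg (by omega), Nat.add_sub_cancel, D.wt (by omega) (by omega)]
        apply mul_left_cancel₀ m2
        linear_combination (-Wt (μ₁ * ν₁) μ₁ μ₂ σ a b i j * Hs b c k j i) * hm - ν₁ * Hs b c k j i *
          Wt_a (p := μ₁ * ν₁) (σ := σ) m1 m2 a b i j
    rw [D.wt (by omega) (by omega)]
    cases b with
    | zero =>
      have := Hs_rec_zero h1 h2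
      rw [if_pos rfl]
      linear_combination (σ * β₂ * ν₁ * Wt (μ₁ * ν₁) μ₁ μ₂ σ a 0 i j) * this
        - σ * β₂ * q ^ (2 * c) * ha
    | succ b =>
      have := Hs_rec_succ h1 h2
      rw [if_neg (by omega), Nat.add_sub_cancel, D.wt (by omega) (by omega)]
      have hb := Wt_b (p := μ₁ * ν₁) (μ₁ := μ₁) (σ := σ) m2 a b i j
      rw [hb] at ha ⊢
      linear_combination (σ * β₂ * ν₁ * (Wt (μ₁ * ν₁) μ₁ μ₂ σ a b i j * μ₂ * σ)) * this
        - σ * β₂ * q ^ (2 * c) * ha + (β₂ * ν₁ * Wt (μ₁ * ν₁) μ₁ μ₂ σ a b i j * μ₂ *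
          (q ^ (2 * a) * (1 - q ^ (4 * (c + 1))) * Hs b (c + 1) k j i)) * hs
  · rw [D.wt0 h]
    have z1 : (if b = 0 then 0 else cf a (b - 1) (c + 1) (Φ (ee i j k))) = 0 := by
      split_ifs
      · rfl
      · exact D.wt0 (by omega)
    have z2 : (if a = 0 then 0 else cf (a - 1) b c (Φ (ee i j k))) = 0 := by
      split_ifs
      · rfl
      · exact D.wt0 (by omega)
    rw [z1, z2]; ring

lemma Dat.R2 (D : Dat α₁ β₁ μ₁ ν₁ α₂ β₂ μ₂ ν₂ σ Φ) (i j : ℕ) :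
    (σ * ν₂ * σ) • Φ (ee i (j + 1) 0) = UU 2 2 (Φ (ee i j 0)) := by
  refine cf_ext fun a b c => ?_
  rw [cf_U22, map_smul, smul_eq_mul]
  by_cases h : 0 + (j + 1) = a + b ∧ j + 1 + i = b + c
  · obtain ⟨h1, h2⟩ := h
    have hm := D.mn
    have hs := D.σ2
    have m1 := D.μ₁0
    have m2 := D.μ₂0
    have h3 : j + 1 = a + b := by omega
    have ha : ν₂ * (if a = 0 ∨ c = 0 then 0 else cf (a - 1) b (c - 1) (Φ (ee i j 0)))
        = ν₁ * Wt (μ₁ * ν₁) μ₁ μ₂ σ a b i j * Hs b (c - 1) 0 j i := by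
      cases a with
      | zero => rw [if_pos (Or.inl rfl), Hs_zero (by omega)]; ring
      | succ a =>
        rw [if_neg (by omega), Nat.add_sub_cancel, D.wt (by omega) (by omega)]
        apply mul_left_cancel₀ m2
        linear_combination (-Wt (μ₁ * ν₁) μ₁ μ₂ σ a b i j * Hs b (c - 1) 0 j i) * hm
          - ν₁ * Hs b (c - 1) 0 j i * Wt_a (p := μ₁ * ν₁) (σ := σ) m1 m2 a b i j
    rw [D.wt (by omega) (by omega)]
    have hj : Wt (μ₁ * ν₁) μ₁ μ₂ σ a b i (j + 1) = Wt (μ₁ * ν₁) μ₁ μ₂ σ a b i j * ν₁ * σ := by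
      apply mul_right_cancel₀ m1
      linear_combination Wt_j (p := μ₁ * ν₁) (μ₂ := μ₂) (σ := σ) m1 a b i j
    rw [hj]
    cases b with
    | zero =>
      have := Hs_j_zero h3 h2
      rw [if_pos rfl]
      linear_combination (σ * ν₂ * σ * (Wt (μ₁ * ν₁) μ₁ μ₂ σ a 0 i j * ν₁ * σ)) * this
        - ν₂ * σ * ha + (ν₂ * σ * ν₁ * Wt (μ₁ * ν₁) μ₁ μ₂ σ a 0 i j * Hs 0 (c - 1) 0 j i) * hs
    | succ b =>
      have := Hs_j_succ h3 h2
      have hr := D.rel2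
      rw [if_neg (by omega), Nat.add_sub_cancel, D.wt (by omega) (by omega)]
      have hb := Wt_b (p := μ₁ * ν₁) (μ₁ := μ₁) (σ := σ) m2 a b i j
      rw [hb] at ha ⊢
      rw [this]
      generalize Wt (μ₁ * ν₁) μ₁ μ₂ σ a b i j = W at *
      generalize Hs b c 0 j i = H1 at *
      generalize Hs (b + 1) (c - 1) 0 j i = H2 at *
      have e1 : β₂ * ν₁ * α₂ * q ^ (2 * a) * q ^ (2 * c) * (W * H1)
        = - q ^ (2 + 2 * a + 2 * c) * H1 * (W * ν₁ * μ₂ * ν₂) := by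
        rw [pow_add, pow_add]
        linear_combination (ν₁ * q ^ (2 * a) * q ^ (2 * c) * (W * H1)) * hr
      rw [e1]
      have hs' : σ * σ * σ * σ = 1 := by
        rw [mul_assoc (σ * σ), hs, one_mul]
      generalize q ^ (2 + 2 * a + 2 * c) = x
      linear_combination (-ν₂ * σ) * ha + ν₂ * W * μ₂ * ν₁ * (-x * H1 + H2) * hs' - ν₂ * ν₁ * W * μ₂ * H2 * hs
  · rw [D.wt0 h]
    have z1 : (if b = 0 then 0 else cf a (b - 1) c (Φ (ee i j 0))) = 0 := by
      split_ifs
      · rfl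
      · exact D.wt0 (by omega)
    have z2 : (if a = 0 ∨ c = 0 then 0 else cf (a - 1) b (c - 1) (Φ (ee i j 0))) = 0 := by
      split_ifs
      · rfl
      · exact D.wt0 (by omega)
    rw [z1, z2]; ring

lemma Dat.row0 (D : Dat α₁ β₁ μ₁ ν₁ α₂ β₂ μ₂ ν₂ σ Φ) (i : ℕ) :
    Φ (ee i 0 0) = (μ₁ * μ₂⁻¹) ^ i • ee 0 0 i := by
  refine cf_ext fun a b c => ?_
  rw [map_smul, cf_ee, smul_eq_mul]
  by_cases h : 0 + 0 = a + b ∧ 0 + i = b + c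
  · rw [D.wt h.1 h.2]
    obtain ⟨rfl, rfl, rfl⟩ : a = 0 ∧ b = 0 ∧ c = i := by omega
    rw [Hs_n0, if_pos ⟨rfl, rfl, rfl⟩, Wt, mul_pow]
    simp [gf_zero, iq_zero, mul_pow]
  · rw [D.wt0 h, if_neg (by omega), mul_zero]

lemma Dat.vac (D : Dat α₁ β₁ μ₁ ν₁ α₂ β₂ μ₂ ν₂ σ Φ) : Φ (ee 0 0 0) = ee 0 0 0 := by
  rw [D.row0]; simp

lemma Dat.R3 (D : Dat α₁ β₁ μ₁ ν₁ α₂ β₂ μ₂ ν₂ σ Φ) (i : ℕ) :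
    (σ * ν₁ * α₂) • Φ (ee (i + 1) 0 0) = UU 1 2 (Φ (ee i 0 0)) := by
  have m2 := D.μ₂0
  have e : ν₂ = ν₁ * (μ₁ * μ₂⁻¹) := by
    field_simp; linear_combination -D.mn
  rw [D.row0, D.row0, map_smul, U12]
  simp only [mul_zero, pow_zero, sub_self, zero_mul, zero_smul, zero_add, smul_smul, mul_one]
  congr 1
  rw [e, pow_succ]; ring

end

/-! ### Part 5: Φ is an intertwiner -/

section
variable {α₁ β₁ μ₁ ν₁ α₂ β₂ μ₂ ν₂ σ : Fq} {Φ : EE}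

local notation "VV" => V α₁ β₁ μ₁ ν₁ σ σ α₂ β₂ μ₂ ν₂ σ σ
local notation "UU" => U α₁ β₁ μ₁ ν₁ σ σ α₂ β₂ μ₂ ν₂ σ σ

lemma Dat.rttV (D : Dat α₁ β₁ μ₁ ν₁ α₂ β₂ μ₂ ν₂ σ Φ) : RTT (T3 VV) :=
  rtt_tri (blk_Q1 _ _ _ _ _ _) (blk_Q2 _ _ _ _ _ _) (rtt_Q1 _ _ _ _ _ _ D.rel1) (rtt_Q2 _ _ _ _ _ _ D.rel2)
    (rtt_Q1 _ _ _ _ _ _ D.rel1)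

lemma Dat.rttU (D : Dat α₁ β₁ μ₁ ν₁ α₂ β₂ μ₂ ν₂ σ Φ) : RTT (T3 UU) :=
  rtt_tri (blk_Q2 _ _ _ _ _ _) (blk_Q1 _ _ _ _ _ _) (rtt_Q2 _ _ _ _ _ _ D.rel2) (rtt_Q1 _ _ _ _ _ _ D.rel1)
    (rtt_Q2 _ _ _ _ _ _ D.rel2)

lemma Dat.invV (D : Dat α₁ β₁ μ₁ ν₁ α₂ β₂ μ₂ ν₂ σ Φ) : IsInv3 VV :=
  inv_tri (blk_Q1 _ _ _ _ _ _) (blk_Q2 _ _ _ _ _ _) (inv_Q1 _ _ _ _ _ _ D.α₁0 D.β₁0 D.μ₁0 D.ν₁0 D.σ0 D.rel1)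
    (inv_Q2 _ _ _ _ _ _ D.α₂0 D.β₂0 D.μ₂0 D.ν₂0 D.σ0 D.rel2)
    (inv_Q1 _ _ _ _ _ _ D.α₁0 D.β₁0 D.μ₁0 D.ν₁0 D.σ0 D.rel1)

lemma Dat.invU (D : Dat α₁ β₁ μ₁ ν₁ α₂ β₂ μ₂ ν₂ σ Φ) : IsInv3 UU :=
  inv_tri (blk_Q2 _ _ _ _ _ _) (blk_Q1 _ _ _ _ _ _) (inv_Q2 _ _ _ _ _ _ D.α₂0 D.β₂0 D.μ₂0 D.ν₂0 D.σ0 D.rel2)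
    (inv_Q1 _ _ _ _ _ _ D.α₁0 D.β₁0 D.μ₁0 D.ν₁0 D.σ0 D.rel1)
    (inv_Q2 _ _ _ _ _ _ D.α₂0 D.β₂0 D.μ₂0 D.ν₂0 D.σ0 D.rel2)

/-- intertwining property of a matrix entry -/
def PI (S T : Matrix (Fin 3) (Fin 3) EE) (Φ : EE) (i j : Fin 3) : Prop :=
  ∀ v, S i j (Φ v) = Φ (T i j v)

/-- an exchange relation which holds in every RTT matrix -/
def Ex (i j k l a b d e : Fin 3) (r s : Fq) : Prop :=
  ∀ T : Matrix (Fin 3) (Fin 3) EE, RTT T →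
    T i j * T k l = r • (T k l * T i j) + s • (T a b * T d e)

lemma PI.step {S T : Matrix (Fin 3) (Fin 3) EE} (hS : RTT S) (hT : RTT T)
    {i j k l a b d e : Fin 3} {r s : Fq} (h : Ex i j k l a b d e r s)
    (h1 : PI S T Φ k l) (h2 : PI S T Φ a b) (h3 : PI S T Φ d e) {v : F3}
    (hv : S i j (Φ v) = Φ (T i j v)) : S i j (Φ (T k l v)) = Φ (T i j (T k l v)) := by
  have e1 := LinearMap.congr_fun (h S hS) (Φ v)
  have e2 := LinearMap.congr_fun (h T hT) v
  simp only [Module.End.mul_apply, LinearMap.add_apply, LinearMap.smul_apply] at e1 e2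
  rw [← h1, e1, hv, h1, h3, h2, e2, map_add, map_smul, map_smul]

lemma ex_row (i : Fin 3) {k l : Fin 3} (hkl : k < l) : Ex i k i l 2 1 2 1 (q ^ 2) 0 := by
  intro T hT; rw [hT.row i hkl, zero_smul, add_zero]
lemma ex_row' (i : Fin 3) {k l : Fin 3} (hkl : k < l) : Ex i l i k 2 1 2 1 ((q ^ 2)⁻¹) 0 := by
  intro T hT
  rw [hT.row i hkl, zero_smul, add_zero, smul_smul, inv_mul_cancel₀ (pow_ne_zero 2 q_ne), one_smul]
lemma ex_col (k : Fin 3) {i j : Fin 3} (hij : i < j) : Ex i k j k 2 1 2 1 (q ^ 2) 0 := by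
  intro T hT; rw [hT.col k hij, zero_smul, add_zero]
lemma ex_anti {i j k l : Fin 3} (hij : i < j) (hkl : k < l) : Ex i l j k 2 1 2 1 1 0 := by
  intro T hT; rw [hT.anti hij hkl, zero_smul, add_zero, one_smul]
lemma ex_anti' {i j k l : Fin 3} (hij : i < j) (hkl : k < l) : Ex j k i l 2 1 2 1 1 0 := by
  intro T hT; rw [hT.anti hij hkl, zero_smul, add_zero, one_smul]
lemma ex_diag {i j k l : Fin 3} (hij : i < j) (hkl : k < l) : Ex i k j l i l j k 1 hh := by
  intro T hT; rw [hT.diag hij hkl, one_smul]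

lemma Dat.ee_k (D : Dat α₁ β₁ μ₁ ν₁ α₂ β₂ μ₂ ν₂ σ Φ) (i j k : ℕ) :
    ∃ r : Fq, ee i j (k + 1) = r • T3 VV 2 1 (ee i j k) := by
  refine ⟨(σ * β₂ * ν₁ * q ^ (2 * j))⁻¹, ?_⟩
  have h : T3 VV 2 1 (ee i j k) = _ := V21 ..
  rw [h, smul_smul, inv_mul_cancel₀, one_smul]
  have := D.σ0; have := D.β₂0; have := D.ν₁0; have := q_ne
  simp [*]

lemma Dat.ee_j (D : Dat α₁ β₁ μ₁ ν₁ α₂ β₂ μ₂ ν₂ σ Φ) (i j k : ℕ) :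
    ∃ r : Fq, ee i (j + 1) k = r • T3 VV 2 2 (ee i j k) := by
  refine ⟨(σ * ν₂ * σ)⁻¹, ?_⟩
  have h : T3 VV 2 2 (ee i j k) = _ := V22 ..
  rw [h, smul_smul, inv_mul_cancel₀, one_smul]
  have := D.σ0; have := D.ν₂0
  simp [*]

lemma Dat.ee_i (D : Dat α₁ β₁ μ₁ ν₁ α₂ β₂ μ₂ ν₂ σ Φ) (i j k : ℕ) :
    ∃ r : Fq, ee (i + 1) j k = r • T3 VV 1 2 (ee i j k) := by
  refine ⟨(σ * ν₁ * α₂ * q ^ (2 * j))⁻¹, ?_⟩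
  have h : T3 VV 1 2 (ee i j k) = _ := V12 ..
  rw [h, smul_smul, inv_mul_cancel₀, one_smul]
  have := D.σ0; have := D.α₂0; have := D.ν₁0; have := q_ne
  simp [*]

lemma PI.of_ee {S T : Matrix (Fin 3) (Fin 3) EE} {i j : Fin 3}
    (h : ∀ a b c, S i j (Φ (ee a b c)) = Φ (T i j (ee a b c))) : PI S T Φ i j := by
  have : S i j ∘ₗ Φ = Φ ∘ₗ T i j := lin_ext h
  exact fun v => LinearMap.congr_fun this v

lemma Dat.i21 (D : Dat α₁ β₁ μ₁ ν₁ α₂ β₂ μ₂ ν₂ σ Φ) : PI (T3 UU) (T3 VV) Φ 2 1 := by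
  refine PI.of_ee fun a b c => ?_
  have h : T3 VV 2 1 (ee a b c) = _ := V21 ..
  rw [h, map_smul]
  exact (D.R1 a b c).symm

lemma Dat.i22 (D : Dat α₁ β₁ μ₁ ν₁ α₂ β₂ μ₂ ν₂ σ Φ) : PI (T3 UU) (T3 VV) Φ 2 2 := by
  refine PI.of_ee fun a b c => ?_
  induction c with
  | zero =>
    have h : T3 VV 2 2 (ee a b 0) = _ := V22 ..
    rw [h, map_smul]
    exact (D.R2 a b).symm
  | succ c ih =>
    obtain ⟨r, hr⟩ := D.ee_k a b c
    rw [hr]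
    simp only [map_smul]
    rw [PI.step D.rttU D.rttV (ex_row' 2 (by decide)) D.i21 D.i21 D.i21 ih]

lemma Dat.i12 (D : Dat α₁ β₁ μ₁ ν₁ α₂ β₂ μ₂ ν₂ σ Φ) : PI (T3 UU) (T3 VV) Φ 1 2 := by
  refine PI.of_ee fun a b c => ?_
  induction c with
  | zero =>
    induction b with
    | zero =>
      have h : T3 VV 1 2 (ee a 0 0) = _ := V12 ..
      rw [h, map_smul, mul_zero, pow_zero, mul_one]
      exact (D.R3 a).symm
    | succ b ih =>
      obtain ⟨r, hr⟩ := D.ee_j a b 0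
      rw [hr]
      simp only [map_smul]
      rw [PI.step D.rttU D.rttV (ex_col 2 (by decide)) D.i22 D.i21 D.i21 ih]
  | succ c ih =>
    obtain ⟨r, hr⟩ := D.ee_k a b c
    rw [hr]
    simp only [map_smul]
    rw [PI.step D.rttU D.rttV (ex_anti (by decide) (by decide)) D.i21 D.i21 D.i21 ih]

lemma Dat.gen (D : Dat α₁ β₁ μ₁ ν₁ α₂ β₂ μ₂ ν₂ σ Φ) {i j : Fin 3}
    {r1 s1 r2 s2 r3 s3 : Fq} {a1 b1 d1 e1 a2 b2 d2 e2 a3 b3 d3 e3 : Fin 3}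
    (x1 : Ex i j 2 1 a1 b1 d1 e1 r1 s1) (x2 : Ex i j 2 2 a2 b2 d2 e2 r2 s2)
    (x3 : Ex i j 1 2 a3 b3 d3 e3 r3 s3)
    (y1 : PI (T3 UU) (T3 VV) Φ a1 b1) (z1 : PI (T3 UU) (T3 VV) Φ d1 e1)
    (y2 : PI (T3 UU) (T3 VV) Φ a2 b2) (z2 : PI (T3 UU) (T3 VV) Φ d2 e2)
    (y3 : PI (T3 UU) (T3 VV) Φ a3 b3) (z3 : PI (T3 UU) (T3 VV) Φ d3 e3)
    (h0 : T3 UU i j (Φ (ee 0 0 0)) = Φ (T3 VV i j (ee 0 0 0))) :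
    PI (T3 UU) (T3 VV) Φ i j := by
  refine PI.of_ee fun a b c => ?_
  induction c with
  | zero =>
    induction b with
    | zero =>
      induction a with
      | zero => exact h0
      | succ a ih =>
        obtain ⟨r, hr⟩ := D.ee_i a 0 0
        rw [hr]
        simp only [map_smul]
        rw [PI.step D.rttU D.rttV x3 D.i12 y3 z3 ih]
    | succ b ih =>
      obtain ⟨r, hr⟩ := D.ee_j a b 0
      rw [hr]
      simp only [map_smul]
      rw [PI.step D.rttU D.rttV x2 D.i22 y2 z2 ih]
  | succ c ih =>
    obtain ⟨r, hr⟩ := D.ee_k a b c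
    rw [hr]
    simp only [map_smul]
    rw [PI.step D.rttU D.rttV x1 D.i21 y1 z1 ih]

lemma Dat.h0 (D : Dat α₁ β₁ μ₁ ν₁ α₂ β₂ μ₂ ν₂ σ Φ) {i j : Fin 3} {r s : Fq}
    (h1 : T3 UU i j (ee 0 0 0) = r • ee 0 0 0) (h2 : T3 VV i j (ee 0 0 0) = s • ee 0 0 0)
    (h : r = s) : T3 UU i j (Φ (ee 0 0 0)) = Φ (T3 VV i j (ee 0 0 0)) := by
  rw [D.vac, h1, h2, map_smul, D.vac, h]

lemma Dat.h00 (D : Dat α₁ β₁ μ₁ ν₁ α₂ β₂ μ₂ ν₂ σ Φ) {i j : Fin 3}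
    (h1 : T3 UU i j (ee 0 0 0) = 0) (h2 : T3 VV i j (ee 0 0 0) = 0) :
    T3 UU i j (Φ (ee 0 0 0)) = Φ (T3 VV i j (ee 0 0 0)) := by
  rw [D.vac, h1, h2, map_zero]

lemma Dat.i02 (D : Dat α₁ β₁ μ₁ ν₁ α₂ β₂ μ₂ ν₂ σ Φ) : PI (T3 UU) (T3 VV) Φ 0 2 :=
  D.gen (ex_anti (by decide) (by decide)) (ex_col 2 (by decide)) (ex_col 2 (by decide))
    D.i21 D.i21 D.i21 D.i21 D.i21 D.i21
    (D.h0 (U_vac ..).2.2.2.1 (V_vac ..).2.2.2.1 (by ring))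

lemma Dat.i20 (D : Dat α₁ β₁ μ₁ ν₁ α₂ β₂ μ₂ ν₂ σ Φ) : PI (T3 UU) (T3 VV) Φ 2 0 :=
  D.gen (ex_row 2 (by decide)) (ex_row 2 (by decide)) (ex_anti' (by decide) (by decide))
    D.i21 D.i21 D.i21 D.i21 D.i21 D.i21
    (D.h0 (U_vac ..).2.2.2.2.1 (V_vac ..).2.2.2.2.1 (by ring))

lemma Dat.i11 (D : Dat α₁ β₁ μ₁ ν₁ α₂ β₂ μ₂ ν₂ σ Φ) : PI (T3 UU) (T3 VV) Φ 1 1 :=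
  D.gen (ex_col 1 (by decide)) (ex_diag (by decide) (by decide)) (ex_row 1 (by decide))
    D.i21 D.i21 D.i12 D.i21 D.i21 D.i21
    (D.h0 (U_vac ..).2.2.2.2.2 (V_vac ..).2.2.2.2.2 (by linear_combination -σ * D.par))

lemma Dat.i01 (D : Dat α₁ β₁ μ₁ ν₁ α₂ β₂ μ₂ ν₂ σ Φ) : PI (T3 UU) (T3 VV) Φ 0 1 :=
  D.gen (ex_col 1 (by decide)) (ex_diag (by decide) (by decide)) (ex_diag (by decide) (by decide))
    D.i21 D.i21 D.i02 D.i21 D.i02 D.i11 (D.h00 (U_vac ..).2.1 (V_vac ..).2.1)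

lemma Dat.i10 (D : Dat α₁ β₁ μ₁ ν₁ α₂ β₂ μ₂ ν₂ σ Φ) : PI (T3 UU) (T3 VV) Φ 1 0 :=
  D.gen (ex_diag (by decide) (by decide)) (ex_diag (by decide) (by decide)) (ex_row 1 (by decide))
    D.i11 D.i20 D.i12 D.i20 D.i21 D.i21 (D.h00 (U_vac ..).2.2.1 (V_vac ..).2.2.1)

lemma Dat.i00 (D : Dat α₁ β₁ μ₁ ν₁ α₂ β₂ μ₂ ν₂ σ Φ) : PI (T3 UU) (T3 VV) Φ 0 0 :=
  D.gen (ex_diag (by decide) (by decide)) (ex_diag (by decide) (by decide))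
    (ex_diag (by decide) (by decide))
    D.i01 D.i20 D.i02 D.i20 D.i02 D.i10 (D.h00 (U_vac ..).1 (V_vac ..).1)

lemma Dat.iT (D : Dat α₁ β₁ μ₁ ν₁ α₂ β₂ μ₂ ν₂ σ Φ) (i j : Fin 3) :
    T3 UU i j * Φ = Φ * T3 VV i j := by
  have h : PI (T3 UU) (T3 VV) Φ i j := by
    fin_cases i <;> fin_cases j
    exacts [D.i00, D.i01, D.i02, D.i10, D.i11, D.i12, D.i20, D.i21, D.i22]
  exact LinearMap.ext h

lemma Dat.iD (D : Dat α₁ β₁ μ₁ ν₁ α₂ β₂ μ₂ ν₂ σ Φ) (i j : Fin 3) :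
    D3 UU i j * Φ = Φ * D3 VV i j := by
  have h : T3 UU * Matrix.diagonal (fun _ => Φ) = Matrix.diagonal (fun _ => Φ) * T3 VV := by
    ext1 i j
    rw [Matrix.mul_diagonal, Matrix.diagonal_mul]
    exact D.iT i j
  have h2 : D3 UU * Matrix.diagonal (fun _ => Φ) = Matrix.diagonal (fun _ => Φ) * D3 VV := by
    rw [← mul_one (D3 UU * _), ← D.invV.1, mul_assoc (D3 UU), ← mul_assoc _ (T3 VV), ← h,
      mul_assoc (T3 UU), ← mul_assoc (D3 UU), D.invU.2, one_mul]
  have h3 := congrFun (congrFun h2 i) j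
  rwa [Matrix.mul_diagonal, Matrix.diagonal_mul] at h3

lemma Dat.iD' (D : Dat α₁ β₁ μ₁ ν₁ α₂ β₂ μ₂ ν₂ σ Φ) (i j : Fin 3) :
    UU (f3 j) (f3 i) * Φ = Φ * VV (f3 j) (f3 i) := by
  have h := D.iD i j
  simp only [D3, smul_mul_assoc, mul_smul_comm] at h
  exact smul_right_injective _ (mul_ne_zero (w3_ne i) (inv_ne_zero (w3_ne j))) h

lemma Dat.iM (D : Dat α₁ β₁ μ₁ ν₁ α₂ β₂ μ₂ ν₂ σ Φ) : UU 3 3 * Φ = Φ * VV 3 3 := by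
  have hV : VV 3 3 = (σ * σ * σ) • (1 : EE) := by
    refine lin_ext fun i j k => ?_
    rw [V, tri_ee]
    simp [Fin.sum_univ_seven, Q1, Q2, pi1, pi2, ee, 
      ← TensorProduct.smul_tmul', TensorProduct.tmul_smul, smul_smul, mul_assoc]
  have hU : UU 3 3 = (σ * σ * σ) • (1 : EE) := by
    refine lin_ext fun i j k => ?_
    rw [U, tri_ee]
    simp [Fin.sum_univ_seven, Q1, Q2, pi1, pi2, ee, 
      ← TensorProduct.smul_tmul', TensorProduct.tmul_smul, smul_smul, mul_assoc]
  rw [hU, hV, smul_mul_assoc, mul_smul_comm, one_mul, mul_one]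

lemma bl_cases : ∀ I J : Fin 7, bl I = bl J → (∃ i j : Fin 3, I = e3 i ∧ J = e3 j) ∨
    (∃ i j : Fin 3, I = f3 j ∧ J = f3 i) ∨ (I = 3 ∧ J = 3) := by decide

lemma Dat.main (D : Dat α₁ β₁ μ₁ ν₁ α₂ β₂ μ₂ ν₂ σ Φ) (I J : Fin 7) :
    UU I J * Φ = Φ * VV I J := by
  by_cases h : bl I = bl J
  · rcases bl_cases I J h with ⟨i, j, rfl, rfl⟩ | ⟨i, j, rfl, rfl⟩ | ⟨rfl, rfl⟩
    · exact D.iT i j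
    · exact D.iD' i j
    · exact D.iM
  · have h1 : UU I J = 0 := blk_tri (blk_Q2 _ _ _ _ _ _) (blk_Q1 _ _ _ _ _ _) (blk_Q2 _ _ _ _ _ _) I J h
    have h2 : VV I J = 0 := blk_tri (blk_Q1 _ _ _ _ _ _) (blk_Q2 _ _ _ _ _ _) (blk_Q1 _ _ _ _ _ _) I J h
    rw [h1, h2, zero_mul, mul_zero]

end

/-! ### Part 6: bijectivity -/

section
variable {α₁ β₁ μ₁ ν₁ α₂ β₂ μ₂ ν₂ σ : Fq} {Φ : EE}

local notation "VV" => V α₁ β₁ μ₁ ν₁ σ σ α₂ β₂ μ₂ ν₂ σ σ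
local notation "UU" => U α₁ β₁ μ₁ ν₁ σ σ α₂ β₂ μ₂ ν₂ σ σ

lemma Dat.ap (D : Dat α₁ β₁ μ₁ ν₁ α₂ β₂ μ₂ ν₂ σ Φ) (I J : Fin 7) (v : F3) :
    UU I J (Φ v) = Φ (VV I J v) := LinearMap.congr_fun (D.main I J) v

lemma Dat.surj (D : Dat α₁ β₁ μ₁ ν₁ α₂ β₂ μ₂ ν₂ σ Φ) : Function.Surjective Φ := by
  rw [← LinearMap.range_eq_top]
  have q0 := q_ne
  have s0 := D.σ0
  have a0 := D.α₁0
  have b0 := D.β₁0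
  have m1 := D.μ₁0
  have m2 := D.μ₂0
  have cl : ∀ (I J : Fin 7) (v w : F3) (r : Fq), v ∈ LinearMap.range Φ → UU I J v = r • w → r ≠ 0 →
      w ∈ LinearMap.range Φ := by
    rintro I J _ w r ⟨v, rfl⟩ h hr
    rw [D.ap] at h
    refine ⟨r⁻¹ • VV I J v, ?_⟩
    rw [map_smul, h, smul_smul, inv_mul_cancel₀ hr, one_smul]
  refine sub_top fun i j k => ?_
  induction k with
  | zero =>
    induction j with
    | zero =>
      induction i with
      | zero => exact ⟨_, D.vac⟩
      | succ i ih => exact cl 5 6 _ _ _ ih (U_dual ..).2.2 (by simp [*])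
    | succ j ih => exact cl 6 6 _ _ _ ih (U_dual ..).1 (by simp [*])
  | succ k ih => exact cl 6 5 _ _ _ ih (U_dual ..).2.1 (by simp [*])

lemma cf_V44 (i j k : ℕ) (v : F3) : cf i j k (VV 4 4 v)
    = (σ⁻¹ * ν₂⁻¹ * σ⁻¹ * (1 - q ^ (4 * (j + 1)))) * cf i (j + 1) k v := by
  have : (cf i j k).comp (VV 4 4)
      = (σ⁻¹ * ν₂⁻¹ * σ⁻¹ * (1 - q ^ (4 * (j + 1)))) • cf i (j + 1) k := by
    refine lin_ext fun a b c => ?_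
    rw [LinearMap.comp_apply, (V_dual ..).1]
    cases b with
    | zero => simp [cf_ee]
    | succ b =>
      simp only [map_smul, cf_ee, LinearMap.smul_apply, smul_eq_mul, Nat.add_sub_cancel,
        Nat.add_right_cancel_iff]
      split_ifs with h
      · rw [h.2.1]
      · ring
  exact LinearMap.congr_fun this v

lemma cf_V45 (i j k : ℕ) (v : F3) : cf i j k (VV 4 5 v)
    = (σ⁻¹ * (q ^ 2 * β₂⁻¹) * ν₁⁻¹ * q ^ (2 * j) * (1 - q ^ (4 * (k + 1)))) * cf i j (k + 1) v := by
  have : (cf i j k).comp (VV 4 5)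
      = (σ⁻¹ * (q ^ 2 * β₂⁻¹) * ν₁⁻¹ * q ^ (2 * j) * (1 - q ^ (4 * (k + 1)))) • cf i j (k + 1) := by
    refine lin_ext fun a b c => ?_
    rw [LinearMap.comp_apply, (V_dual ..).2.1]
    cases c with
    | zero => simp [cf_ee]
    | succ c =>
      simp only [map_smul, cf_ee, LinearMap.smul_apply, smul_eq_mul, Nat.add_sub_cancel,
        Nat.add_right_cancel_iff]
      split_ifs with h
      · rw [h.2.1, h.2.2]
      · ring
  exact LinearMap.congr_fun this v

lemma cf_V54 (i j k : ℕ) (v : F3) : cf i j k (VV 5 4 v)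
    = (ν₁⁻¹ * (q ^ 2 * α₂⁻¹) * σ⁻¹ * q ^ (2 * j) * (1 - q ^ (4 * (i + 1)))) * cf (i + 1) j k v := by
  have : (cf i j k).comp (VV 5 4)
      = (ν₁⁻¹ * (q ^ 2 * α₂⁻¹) * σ⁻¹ * q ^ (2 * j) * (1 - q ^ (4 * (i + 1)))) • cf (i + 1) j k := by
    refine lin_ext fun a b c => ?_
    rw [LinearMap.comp_apply, (V_dual ..).2.2]
    cases a with
    | zero => simp [cf_ee]
    | succ a =>
      simp only [map_smul, cf_ee, LinearMap.smul_apply, smul_eq_mul, Nat.add_sub_cancel,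
        Nat.add_right_cancel_iff]
      split_ifs with h
      · rw [h.2.1, h.1]
      · ring
  exact LinearMap.congr_fun this v

lemma Dat.ker (D : Dat α₁ β₁ μ₁ ν₁ α₂ β₂ μ₂ ν₂ σ Φ) (N : ℕ) : ∀ v : F3,
    (∀ i j k, N ≤ i + j + k → cf i j k v = 0) → Φ v = 0 → v = 0 := by
  have q0 := q_ne
  have s0 := D.σ0
  have a0 := D.α₂0
  have b0 := D.β₂0
  have n1 := D.ν₁0
  have n2 := D.ν₂0
  induction N with
  | zero =>
    intro v h _
    exact cf_ext fun a b c => by rw [h a b c (by omega), map_zero]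
  | succ N ih =>
    intro v h hv
    have z : ∀ I J, Φ (VV I J v) = 0 := fun I J => by rw [← D.ap, hv, map_zero]
    have h1 : VV 4 4 v = 0 := ih _ (fun i j k hi => by
      rw [cf_V44, h i (j + 1) k (by omega), mul_zero]) (z 4 4)
    have h2 : VV 4 5 v = 0 := ih _ (fun i j k hi => by
      rw [cf_V45, h i j (k + 1) (by omega), mul_zero]) (z 4 5)
    have h3 : VV 5 4 v = 0 := ih _ (fun i j k hi => by
      rw [cf_V54, h (i + 1) j k (by omega), mul_zero]) (z 5 4)
    have k1 : ∀ i j k, cf i (j + 1) k v = 0 := fun i j k => by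
      have e := cf_V44 (α₁ := α₁) (β₁ := β₁) (μ₁ := μ₁) (ν₁ := ν₁) (α₂ := α₂) (β₂ := β₂) (μ₂ := μ₂)
        (ν₂ := ν₂) (σ := σ) i j k v
      rw [h1, map_zero] at e
      have := one_sub_q_ne j
      exact (mul_eq_zero.mp e.symm).resolve_left (by clear e; simp only [ne_eq, mul_eq_zero, not_or]; simp [s0, a0, b0, n1, n2, q0, this])
    have k2 : ∀ i j k, cf i j (k + 1) v = 0 := fun i j k => by
      have e := cf_V45 (α₁ := α₁) (β₁ := β₁) (μ₁ := μ₁) (ν₁ := ν₁) (α₂ := α₂) (β₂ := β₂) (μ₂ := μ₂)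
        (ν₂ := ν₂) (σ := σ) i j k v
      rw [h2, map_zero] at e
      have := one_sub_q_ne k
      exact (mul_eq_zero.mp e.symm).resolve_left (by clear e; simp only [ne_eq, mul_eq_zero, not_or]; simp [s0, a0, b0, n1, n2, q0, this])
    have k3 : ∀ i j k, cf (i + 1) j k v = 0 := fun i j k => by
      have e := cf_V54 (α₁ := α₁) (β₁ := β₁) (μ₁ := μ₁) (ν₁ := ν₁) (α₂ := α₂) (β₂ := β₂) (μ₂ := μ₂)
        (ν₂ := ν₂) (σ := σ) i j k v
      rw [h3, map_zero] at e
      have := one_sub_q_ne i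
      exact (mul_eq_zero.mp e.symm).resolve_left (by clear e; simp only [ne_eq, mul_eq_zero, not_or]; simp [s0, a0, b0, n1, n2, q0, this])
    have hv' : v = cf 0 0 0 v • ee 0 0 0 := by
      refine cf_ext fun a b c => ?_
      rw [map_smul, cf_ee]
      cases a with
      | succ a => rw [k3]; simp
      | zero =>
        cases b with
        | succ b => rw [k1]; simp
        | zero =>
          cases c with
          | succ c => rw [k2]; simp
          | zero => simp
    have h4 : Φ v = v := by
      rw [hv', map_smul, D.vac]
    rw [← h4, hv]

lemma Dat.inj (D : Dat α₁ β₁ μ₁ ν₁ α₂ β₂ μ₂ ν₂ σ Φ) : Function.Injective Φ := by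
  rw [injective_iff_map_eq_zero]
  intro v hv
  refine D.ker ((B3.repr v).support.sup (fun x => x.1 + x.2.1 + x.2.2) + 1) v ?_ hv
  intro i j k h
  by_contra hne
  have hm : (i, j, k) ∈ (B3.repr v).support := Finsupp.mem_support_iff.mpr hne
  have := Finset.le_sup (f := fun x : ℕ × ℕ × ℕ => x.1 + x.2.1 + x.2.2) hm
  simp only at this
  omega

end
/-- Theorem 4.1: the map Φ given on the basis by the matrix S (applied to the
reversed lower indices) is bijective, normalized, and intertwines π₁₂₁ and π₂₁₂. -/
theorem intertwiner_121_212
    (α₁ β₁ μ₁ ν₁ κ₁ σ₁ : Fq) (hα₁ : α₁ ≠ 0) (hβ₁ : β₁ ≠ 0) (hμ₁ : μ₁ ≠ 0) (hν₁ : ν₁ ≠ 0)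
    (hκ₁ : κ₁ ≠ 0) (hσ₁0 : σ₁ ≠ 0)
    (hrel₁ : α₁ * β₁ = -q ^ 2 * (μ₁ * ν₁)) (hσ₁ : σ₁ = 1 ∨ σ₁ = -1)
    (α₂ β₂ μ₂ ν₂ κ₂ σ₂ : Fq) (hα₂ : α₂ ≠ 0) (hβ₂ : β₂ ≠ 0) (hμ₂ : μ₂ ≠ 0) (hν₂ : ν₂ ≠ 0)
    (hκ₂ : κ₂ ≠ 0) (hσ₂0 : σ₂ ≠ 0)
    (hrel₂ : α₂ * β₂ = -q ^ 2 * (μ₂ * ν₂)) (hσ₂ : σ₂ = 1 ∨ σ₂ = -1)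
    (par1 : κ₁ = σ₁) (par2a : κ₁ = κ₂) (par2b : κ₂ = σ₂) (par2c : α₁ * β₁ = α₂ * β₂)
    (Φ : F ⊗[Fq] (F ⊗[Fq] F) →ₗ[Fq] F ⊗[Fq] (F ⊗[Fq] F))
    (hΦ : ∀ i j k : ℕ,
      Φ (ket i ⊗ₜ[Fq] (ket j ⊗ₜ[Fq] ket k))
        = ∑ᶠ a : ℕ, ∑ᶠ b : ℕ, ∑ᶠ c : ℕ,
            Sfull α₁ β₁ μ₁ μ₂ σ₁ a b c k j i • (ket a ⊗ₜ[Fq] (ket b ⊗ₜ[Fq] ket c))) :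
    Function.Bijective Φ ∧
    Φ (ket 0 ⊗ₜ[Fq] (ket 0 ⊗ₜ[Fq] ket 0)) = ket 0 ⊗ₜ[Fq] (ket 0 ⊗ₜ[Fq] ket 0) ∧
    ∀ I J : Fin 7,
      (∑ K : Fin 7, ∑ L : Fin 7,
          TensorProduct.map (pi2 α₂ β₂ μ₂ ν₂ κ₂ σ₂ I K)
            (TensorProduct.map (pi1 α₁ β₁ μ₁ ν₁ κ₁ σ₁ K L) (pi2 α₂ β₂ μ₂ ν₂ κ₂ σ₂ L J))) ∘ₗ Φ
        = Φ ∘ₗ (∑ K : Fin 7, ∑ L : Fin 7,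
            TensorProduct.map (pi1 α₁ β₁ μ₁ ν₁ κ₁ σ₁ I K)
              (TensorProduct.map (pi2 α₂ β₂ μ₂ ν₂ κ₂ σ₂ K L) (pi1 α₁ β₁ μ₁ ν₁ κ₁ σ₁ L J))) := by
  subst par1 par2a par2b
  have D : Dat α₁ β₁ μ₁ ν₁ α₂ β₂ μ₂ ν₂ κ₁ Φ :=
    { α₁0 := hα₁, β₁0 := hβ₁, μ₁0 := hμ₁, ν₁0 := hν₁, α₂0 := hα₂, β₂0 := hβ₂, μ₂0 := hμ₂
      ν₂0 := hν₂, σ2 := by rcases hσ₁ with h | h <;> rw [h] <;> ring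
      rel1 := hrel₁, rel2 := hrel₂, par := par2c
      co := fun a b c i j k => by
        have h : Φ (ee i j k) = ∑ᶠ a : ℕ, ∑ᶠ b : ℕ, ∑ᶠ c : ℕ,
          Sfull α₁ β₁ μ₁ μ₂ κ₁ a b c k j i • ee a b c := hΦ i j k
        rw [h]
        exact finsum_cf (fun a b c => Sfull α₁ β₁ μ₁ μ₂ κ₁ a b c k j i) (i + j + k + 1)
          (fun a b c h => Sfull_zero (by omega)) a b c }
  refine ⟨⟨D.inj, D.surj⟩, D.vac, fun I J => ?_⟩
  have h := D.main I J
  rw [U, V, tri_apply, tri_apply] at h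
  exact h
end
end
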